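/- Suppose α has an adjusted nearest integer expansion with liminf_{i→∞} a_i = 2, and let d_n^± be the quantities associated to γ_*. Let θ_1 := (√13 − 3)/2. If σ ∈ {+1, −1} satisfies σ·d_i^+ > 0 and ᾱ_i < 1/2, then (1/4)·(1 − ᾱ_i + σ·d_i^−)·(1 + ε_{i+1}α_i + σ·d_i^+)/(1 + ε_{i+1}ᾱ_i α_i) ≥ (1/4)·(√10 − 3)·(3 − θ_1 − θ_1/(1 − θ_1))/((11 − √10)/3 − θ_1) (= 1/25.159…). -/

import Mathlib

open Filter Finset

attribute [local instance] Classical.propDecidable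

/-- Distance from `x` to the nearest integer, `‖x‖`. -/
noncomputable def nint (x : ℝ) : ℝ := |x - round x|

/-- The two-sided inhomogeneous approximation constant
`M(α,γ) = liminf_{|n|→∞} |n|·‖nα-γ‖`. -/
noncomputable def Mval (α γ : ℝ) : ℝ :=
  Filter.liminf (fun n : ℤ => (|n| : ℝ) * nint (n * α - γ)) Filter.cofinite

/-- Denominators `q_i` of a semi-regular continued fraction with partial quotients `a`
and signs `e`: `q_0 = 1`, `q_1 = a_1`, `q_i = a_i q_{i-1} + ε_i q_{i-2}`. -/
noncomputable def qs (a e : ℕ → ℤ) : ℕ → ℤ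
  | 0 => 1
  | 1 => a 1
  | i + 2 => a (i + 2) * qs a e (i + 1) + e (i + 2) * qs a e i

/-- Reversed tails `ᾱ_i = q_{i-1}/q_i` (with `ᾱ_0 = 0`). -/
noncomputable def ab (a e : ℕ → ℤ) (i : ℕ) : ℝ :=
  if i = 0 then 0 else (qs a e (i - 1) : ℝ) / (qs a e i : ℝ)

/-- An adjusted nearest integer expansion of `α`: a semi-regular continued fraction
`α = 1/(a_1 + ε_2/(a_2 + ε_3/(a_3 + ⋯)))` with tails `t i = α_i`, satisfying the
conditions (i)-(iv) of an adjusted expansion. -/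
structure ANIE (α : ℝ) where
  /-- partial quotients `a_i` (for `i ≥ 1`) -/
  a : ℕ → ℤ
  /-- signs `ε_i` -/
  e : ℕ → ℤ
  /-- tails: `t i = α_i`, `t 0 = α` -/
  t : ℕ → ℝ
  ha : ∀ i, 1 ≤ i → 2 ≤ a i
  he : ∀ i, e i = 1 ∨ e i = -1
  he1 : e 1 = 1
  ht0 : t 0 = α
  htpos : ∀ i, 0 < t i
  htlt1 : ∀ i, t i < 1
  hrec : ∀ i, t i = 1 / ((a (i + 1) : ℝ) + (e (i + 2) : ℝ) * t (i + 1))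
  /-- condition (i): `a_i = 2` implies `ε_i = +1` or `ε_{i+1} = +1` -/
  hcond1 : ∀ i, 1 ≤ i → a i = 2 → e i = 1 ∨ e (i + 1) = 1
  /-- condition (ii): if `a_i = 2`, `ε_i = -1` then `1/ᾱ_{i-1} - 1/α_i ≥ 1` -/
  hcond2 : ∀ i, 1 ≤ i → a i = 2 → e i = -1 → 1 / ab a e (i - 1) - 1 / t i ≥ 1
  /-- condition (iii): if `a_i = 2`, `ε_{i+1} = -1` then `1/α_i - 1/ᾱ_{i-1} > 1` -/
  hcond3 : ∀ i, 1 ≤ i → a i = 2 → e (i + 1) = -1 → 1 / t i - 1 / ab a e (i - 1) > 1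
  /-- condition (iv): no block `2, (-3,)^k, -2` in the sequence `(ε_i a_i)` -/
  hcond4 : ∀ i k, 1 ≤ i →
    ¬(e i * a i = 2 ∧ (∀ j, j < k → e (i + 1 + j) * a (i + 1 + j) = -3) ∧
        e (i + 1 + k) * a (i + 1 + k) = -2)

namespace ANIE

variable {α : ℝ}

/-- `D n = D_{n-1} = α_0 α_1 ⋯ α_{n-1}` (so `D 0 = 1`, `D 1 = α`). -/
noncomputable def D (E : ANIE α) (n : ℕ) : ℝ := ∏ j ∈ Finset.range n, E.t j

/-- The number of indices `1 ≤ k ≤ i` with `a_k` odd. -/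
noncomputable def oddIdx (E : ANIE α) (i : ℕ) : ℕ :=
  ((Finset.Icc 1 i).filter fun k => Odd (E.a k)).card

/-- `λ_i`: zero if `a_i` is even, `(-1)^j` if `a_i = a_{n_j}` is the `j`-th odd partial
quotient. -/
noncomputable def lam (E : ANIE α) (i : ℕ) : ℤ :=
  if Odd (E.a i) then (-1) ^ E.oddIdx i else 0

/-- `γ_* = Σ_{i≥1} (a_i - 1 + ε_i + λ_i)/2 · D_{i-1}`. -/
noncomputable def gammaStar (E : ANIE α) : ℝ :=
  ∑' k : ℕ,
    (((E.a (k + 1) : ℝ) - 1 + (E.e (k + 1) : ℝ) + (E.lam (k + 1) : ℝ)) / 2) * E.D (k + 1)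

/-- `ᾱ_i = q_{i-1}/q_i`. -/
noncomputable def abar (E : ANIE α) (i : ℕ) : ℝ := ab E.a E.e i

/-- `δ_i = -(-ε_1)(-ε_2)⋯(-ε_{i+1})`. -/
noncomputable def delta (E : ANIE α) (i : ℕ) : ℤ := -∏ j ∈ Finset.Icc 1 (i + 1), (-E.e j)

/-- `d_n^- = (Σ_{i=1}^n t_i δ_{i-1} q_{i-1}) / (δ_{n-1} q_n)` for `γ_*` (`t_i = λ_i`). -/
noncomputable def dminus (E : ANIE α) (n : ℕ) : ℝ :=
  (∑ i ∈ Finset.Icc 1 n, (E.lam i : ℝ) * (E.delta (i - 1) : ℝ) * (qs E.a E.e (i - 1) : ℝ)) /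
    ((E.delta (n - 1) : ℝ) * (qs E.a E.e n : ℝ))

/-- `d_n^+ = (Σ_{i=n+1}^∞ t_i D_{i-1}) / D_{n-1}` for `γ_*` (`t_i = λ_i`). -/
noncomputable def dplus (E : ANIE α) (n : ℕ) : ℝ :=
  (∑' k : ℕ, (E.lam (n + 1 + k) : ℝ) * E.D (n + 1 + k)) / E.D n

/-- `i ∈ S(γ_*)`: `|d_i^-| ≤ 1 - ᾱ_i` and `-(1-ε_{i+1}α_i) ≤ d_i^+ ≤ 1+ε_{i+1}α_i`. -/
def inS (E : ANIE α) (i : ℕ) : Prop :=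
  |E.dminus i| ≤ 1 - E.abar i ∧
    -(1 - (E.e (i + 1) : ℝ) * E.t i) ≤ E.dplus i ∧
      E.dplus i ≤ 1 + (E.e (i + 1) : ℝ) * E.t i

end ANIE


/-- Abstract data of an adjusted nearest integer expansion: quotients, signs, tails and
reversed tails. -/
structure Sys0 (a e : ℕ → ℤ) (t b : ℕ → ℝ) : Prop where
  ha : ∀ n, 1 ≤ n → 2 ≤ a n
  he : ∀ n, e n = 1 ∨ e n = -1
  he1 : e 1 = 1
  tpos : ∀ n, 0 < t n
  tlt : ∀ n, t n < 1
  b0 : b 0 = 0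
  bnn : ∀ n, 0 ≤ b n
  blt : ∀ n, b n < 1
  trp : ∀ n, e (n + 2) = 1 → t n * ((a (n + 1) : ℝ) + t (n + 1)) = 1
  trm : ∀ n, e (n + 2) = -1 → t n * ((a (n + 1) : ℝ) - t (n + 1)) = 1
  brp : ∀ n, e (n + 1) = 1 → b (n + 1) * ((a (n + 1) : ℝ) + b n) = 1
  brm : ∀ n, e (n + 1) = -1 → b (n + 1) * ((a (n + 1) : ℝ) - b n) = 1
  c1 : ∀ n, a (n + 1) = 2 → e (n + 1) = 1 ∨ e (n + 2) = 1
  c2 : ∀ n, a (n + 1) = 2 → e (n + 1) = -1 → b n * (1 + t (n + 1)) ≤ t (n + 1)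
  c3 : ∀ n, a (n + 1) = 2 → e (n + 2) = -1 → t (n + 1) * (1 + b n) < b n
  c4 : ∀ n, ¬ (a (n + 1) = 2 ∧ e (n + 1) = 1 ∧ a (n + 2) = 2 ∧ e (n + 2) = -1)
  c5 : ∀ n, ¬ (a (n + 1) = 2 ∧ e (n + 1) = 1 ∧ a (n + 2) = 3 ∧ e (n + 2) = -1 ∧
    a (n + 3) = 2 ∧ e (n + 3) = -1)

theorem ub_of {x d D : ℝ} (h : x * d = 1) (hx : 0 ≤ x) (hD : D ≤ d) (hD0 : 0 < D) :
    x ≤ 1 / D := by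
  rw [le_div_iff₀ hD0]; nlinarith

theorem lb_of {x d D : ℝ} (h : x * d = 1) (hx : 0 ≤ x) (hD : d ≤ D) (hD0 : 0 < D) :
    1 / D ≤ x := by
  rw [div_le_iff₀ hD0]; nlinarith

namespace Sys0

variable {a e : ℕ → ℤ} {t b : ℕ → ℝ}

theorem a_cases (S : Sys0 a e t b) (n : ℕ) : a (n + 1) = 2 ∨ 3 ≤ a (n + 1) := by
  have := S.ha (n + 1) (by omega); omega

theorem b_half (S : Sys0 a e t b) (n : ℕ) (h : e (n + 1) = -1) : b n ≤ 1 / 2 := by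
  rcases n with _ | m
  · rw [S.b0]; norm_num
  · have hb := S.bnn (m + 1)
    have hb' := S.bnn m
    have hb1 := S.blt m
    rcases S.a_cases m with h2 | h3
    · have he : e (m + 1) = 1 := by
        rcases S.c1 m h2 with h' | h'
        · exact h'
        · rw [h] at h'; norm_num at h'
      have := S.brp m he
      rw [h2] at this
      exact ub_of this hb (by push_cast; linarith) (by norm_num)
    · have h3' : (3 : ℝ) ≤ a (m + 1) := by exact_mod_cast h3
      rcases S.he (m + 1) with he | he
      · exact ub_of (S.brp m he) hb (by linarith) (by norm_num)
      · exact ub_of (S.brm m he) hb (by linarith) (by norm_num)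

theorem t_half (S : Sys0 a e t b) (n : ℕ) (h : e (n + 1) = -1) : t n ≤ 1 / 2 := by
  have hb := (S.tpos n).le
  have hb' := S.tpos (n + 1)
  have hb1 := S.tlt (n + 1)
  rcases S.a_cases n with h2 | h3
  · have he : e (n + 2) = 1 := by
      rcases S.c1 n h2 with h' | h'
      · rw [h] at h'; norm_num at h'
      · exact h'
    have := S.trp n he
    rw [h2] at this
    exact ub_of this hb (by push_cast; linarith) (by norm_num)
  · have h3' : (3 : ℝ) ≤ a (n + 1) := by exact_mod_cast h3
    rcases S.he (n + 2) with he | he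
    · exact ub_of (S.trp n he) hb (by linarith) (by norm_num)
    · exact ub_of (S.trm n he) hb (by linarith) (by norm_num)

/-- `a_n ≥ k`, `ε_n = 1`. -/
theorem b_ubp (S : Sys0 a e t b) (n : ℕ) (k : ℤ) (hk : k ≤ a (n + 1)) (hk0 : 0 < k)
    (he : e (n + 1) = 1) : b (n + 1) ≤ 1 / (k : ℝ) := by
  have hk' : (k : ℝ) ≤ a (n + 1) := by exact_mod_cast hk
  exact ub_of (S.brp n he) (S.bnn _) (by linarith [S.bnn n]) (by exact_mod_cast hk0)

theorem b_ub (S : Sys0 a e t b) (n : ℕ) (k : ℤ) (hk : k ≤ a (n + 1)) (hk0 : 0 < k) :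
    b (n + 1) ≤ 1 / ((k : ℝ) - 1 / 2) := by
  have hk' : (k : ℝ) ≤ a (n + 1) := by exact_mod_cast hk
  have hk1 : (1 : ℝ) ≤ k := by exact_mod_cast hk0
  rcases S.he (n + 1) with he | he
  · exact ub_of (S.brp n he) (S.bnn _) (by linarith [S.bnn n]) (by linarith)
  · exact ub_of (S.brm n he) (S.bnn _) (by linarith [S.b_half n he]) (by linarith)

theorem t_ubp (S : Sys0 a e t b) (n : ℕ) (k : ℤ) (hk : k ≤ a (n + 1)) (hk0 : 0 < k)
    (he : e (n + 2) = 1) : t n ≤ 1 / (k : ℝ) := by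
  have hk' : (k : ℝ) ≤ a (n + 1) := by exact_mod_cast hk
  exact ub_of (S.trp n he) (S.tpos _).le (by linarith [S.tpos (n + 1)]) (by exact_mod_cast hk0)

theorem t_ub (S : Sys0 a e t b) (n : ℕ) (k : ℤ) (hk : k ≤ a (n + 1)) (hk0 : 0 < k) :
    t n ≤ 1 / ((k : ℝ) - 1 / 2) := by
  have hk' : (k : ℝ) ≤ a (n + 1) := by exact_mod_cast hk
  have hk1 : (1 : ℝ) ≤ k := by exact_mod_cast hk0
  rcases S.he (n + 2) with he | he
  · exact ub_of (S.trp n he) (S.tpos _).le (by linarith [S.tpos (n + 1)]) (by linarith)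
  · exact ub_of (S.trm n he) (S.tpos _).le (by linarith [S.t_half (n + 1) he]) (by linarith)

theorem b3 (S : Sys0 a e t b) (n : ℕ) (hk : 3 ≤ a (n + 1)) : b (n + 1) ≤ 2 / 5 := by
  have := S.b_ub n 3 hk (by norm_num); norm_num at this; exact this

theorem t3 (S : Sys0 a e t b) (n : ℕ) (hk : 3 ≤ a (n + 1)) : t n ≤ 2 / 5 := by
  have := S.t_ub n 3 hk (by norm_num); norm_num at this; exact this

theorem b2p (S : Sys0 a e t b) (n : ℕ) (he : e (n + 1) = 1) : b (n + 1) ≤ 1 / 2 := by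
  have := S.b_ubp n 2 (S.ha _ (by omega)) (by norm_num) he; norm_num at this ⊢; exact this

theorem t2p (S : Sys0 a e t b) (n : ℕ) (he : e (n + 2) = 1) : t n ≤ 1 / 2 := by
  have := S.t_ubp n 2 (S.ha _ (by omega)) (by norm_num) he; norm_num at this ⊢; exact this

/-- golden-ratio bounds -/
theorem gold {u v : ℝ} (hu : 0 ≤ u) (hu1 : u < 1)
    (h1 : u * (3 - v) ≤ 1) (h2 : v * (3 - u) ≤ 1) : u ≤ 382 / 1000 := by
  by_contra hc
  push Not at hc
  rcases le_total u v with h | h <;> nlinarith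

theorem gold_b (S : Sys0 a e t b) (n : ℕ) (h2 : a (n + 1) = 2) (hm : e (n + 1) = -1) :
    b n ≤ 382 / 1000 := by
  have hc2 := S.c2 n h2 hm
  have hep : e (n + 2) = 1 := by
    rcases S.c1 n h2 with h' | h'
    · rw [hm] at h'; norm_num at h'
    · exact h'
  have hb0 := S.bnn n
  have hb1 := S.blt n
  have ht0 := S.tpos (n + 1)
  have hsmall : t (n + 1) ≤ 1 / 2 → b n ≤ 382 / 1000 := by
    intro h; nlinarith
  rcases S.a_cases (n + 1) with k2 | k3
  · rcases S.he (n + 3) with k | k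
    · exact hsmall (S.t2p (n + 1) k)
    · have hc3 := S.c3 (n + 1) k2 k
      have r1 := S.trm (n + 1) k
      have r2 := S.brm n hm
      rw [k2] at r1
      rw [h2] at r2
      push_cast at r1 r2
      have ht2 := S.tpos (n + 2)
      have ht2' := S.tlt (n + 2)
      have hb2 := S.bnn (n + 1)
      have e1 : b n * (3 - t (n + 2)) ≤ 1 := by
        have : b n * (1 + t (n + 1)) * (2 - t (n + 2)) ≤ t (n + 1) * (2 - t (n + 2)) :=
          mul_le_mul_of_nonneg_right hc2 (by linarith)
        nlinarith
      have e2 : t (n + 2) * (3 - b n) ≤ 1 := by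
        have : t (n + 2) * (1 + b (n + 1)) * (2 - b n) ≤ b (n + 1) * (2 - b n) :=
          mul_le_mul_of_nonneg_right hc3.le (by linarith)
        nlinarith
      exact gold hb0 hb1 e1 e2
  · exact hsmall (by linarith [S.t3 (n + 1) k3])

theorem gold_t (S : Sys0 a e t b) (n : ℕ) (h2 : a (n + 1) = 2) (hm : e (n + 2) = -1) :
    t (n + 1) ≤ 382 / 1000 := by
  have hc3 := S.c3 n h2 hm
  have hep : e (n + 1) = 1 := by
    rcases S.c1 n h2 with h' | h'
    · exact h'
    · rw [hm] at h'; norm_num at h'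
  have hb0 := S.bnn n
  have ht0 := S.tpos (n + 1)
  have ht1 := S.tlt (n + 1)
  have hsmall : b n ≤ 1 / 2 → t (n + 1) ≤ 382 / 1000 := by
    intro h; nlinarith
  rcases n with _ | m
  · exact hsmall (by rw [S.b0]; norm_num)
  rcases S.a_cases m with k2 | k3
  · rcases S.he (m + 1) with k | k
    · exact hsmall (S.b2p m k)
    · have hc2 := S.c2 m k2 k
      have r1 := S.brm m k
      have r2 := S.trm (m + 1) hm
      rw [k2] at r1
      rw [h2] at r2
      push_cast at r1 r2
      have hbm := S.bnn m
      have hbm' := S.blt m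
      have e1 : t (m + 2) * (3 - b m) ≤ 1 := by
        have : t (m + 2) * (1 + b (m + 1)) * (2 - b m) ≤ b (m + 1) * (2 - b m) :=
          mul_le_mul_of_nonneg_right hc3.le (by linarith)
        nlinarith
      have e2 : b m * (3 - t (m + 2)) ≤ 1 := by
        have : b m * (1 + t (m + 1)) * (2 - t (m + 2)) ≤ t (m + 1) * (2 - t (m + 2)) :=
          mul_le_mul_of_nonneg_right hc2 (by linarith)
        nlinarith
      exact gold ht0.le ht1 e1 e2
  · exact hsmall (by linarith [S.b3 m k3])

theorem b_le (S : Sys0 a e t b) (n : ℕ) : b n ≤ 6181 / 10000 := by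
  rcases n with _ | n
  · rw [S.b0]; norm_num
  rcases S.a_cases n with k2 | k3
  · rcases S.he (n + 1) with k | k
    · linarith [S.b2p n k]
    · have r := S.brm n k
      have := S.gold_b n k2 k
      rw [k2] at r
      push_cast at r
      have := ub_of (D := 2 - 382 / 1000) r (S.bnn _) (by linarith) (by norm_num)
      norm_num at this ⊢; linarith
  · linarith [S.b3 n k3]

theorem t_le (S : Sys0 a e t b) (n : ℕ) : t n ≤ 6181 / 10000 := by
  rcases S.a_cases n with k2 | k3
  · rcases S.he (n + 2) with k | k
    · linarith [S.t2p n k]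
    · have r := S.trm n k
      have := S.gold_t n k2 k
      rw [k2] at r
      push_cast at r
      have := ub_of (D := 2 - 382 / 1000) r (S.tpos _).le (by linarith) (by norm_num)
      norm_num at this ⊢; linarith
  · linarith [S.t3 n k3]

end Sys0

/-- Abstract data including the normalised quantities `g = |d^-|`, `h = |d^+|` (up to sign). -/
structure Sys (a e : ℕ → ℤ) (t b g h : ℕ → ℝ) : Prop extends Sys0 a e t b where
  g0 : g 0 = 0
  gop : ∀ n, Odd (a (n + 1)) → e (n + 1) = 1 → g (n + 1) = b (n + 1) * (1 + g n)
  gom : ∀ n, Odd (a (n + 1)) → e (n + 1) = -1 → g (n + 1) = b (n + 1) * (1 - g n)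
  gep : ∀ n, ¬ Odd (a (n + 1)) → e (n + 1) = 1 → g (n + 1) = -(b (n + 1) * g n)
  gem : ∀ n, ¬ Odd (a (n + 1)) → e (n + 1) = -1 → g (n + 1) = b (n + 1) * g n
  hod : ∀ n, Odd (a (n + 1)) → h n = t n * (1 - h (n + 1))
  hev : ∀ n, ¬ Odd (a (n + 1)) → h n = t n * h (n + 1)
  hnn : ∀ n, 0 ≤ h n
  hle : ∀ n, h n ≤ t n

theorem not_odd2 {x : ℤ} (h : x = 2) : ¬ Odd x := by subst h; decide
theorem not_odd4 {x : ℤ} (h : x = 4) : ¬ Odd x := by subst h; decide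
theorem odd3 {x : ℤ} (h : x = 3) : Odd x := by subst h; decide
theorem odd_ge {x : ℤ} (h : Odd x) (h2 : 2 ≤ x) : x = 3 ∨ 5 ≤ x := by
  obtain ⟨k, hk⟩ := h; omega
theorem even_ge {x : ℤ} (h : ¬ Odd x) (h2 : 2 ≤ x) : x = 2 ∨ 4 ≤ x := by
  rw [Int.not_odd_iff_even] at h; obtain ⟨k, hk⟩ := h; omega
theorem sgn_absurd {x : ℤ} {p : Prop} (h : x = 1) (h' : x = -1) : p := by omega

namespace Sys

variable {a e : ℕ → ℤ} {t b g h : ℕ → ℝ}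

theorem g_bd (S : Sys a e t b g h) (n : ℕ) : -(1 / 4) ≤ g n ∧ g n ≤ 1 / 2 := by
  induction n with
  | zero => rw [S.g0]; norm_num
  | succ n ih =>
    obtain ⟨i1, i2⟩ := ih
    have hb := S.bnn (n + 1)
    by_cases ho : Odd (a (n + 1))
    · rcases S.he (n + 1) with k | k
      · rw [S.gop n ho k]
        have h3 : 3 ≤ a (n + 1) := by rcases odd_ge ho (S.ha _ (by omega)) with h | h <;> omega
        have := S.b_ubp n 3 h3 (by norm_num) k
        push_cast at this
        constructor <;> nlinarith
      · rw [S.gom n ho k]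
        have h3 : 3 ≤ a (n + 1) := by rcases odd_ge ho (S.ha _ (by omega)) with h | h <;> omega
        have := S.b3 n h3
        constructor <;> nlinarith
    · rcases S.he (n + 1) with k | k
      · rw [S.gep n ho k]
        have := S.b2p n k
        constructor <;> nlinarith
      · rw [S.gem n ho k]
        have := S.b_le (n + 1)
        constructor <;> nlinarith

/-- crude bound for odd `a_n` -/
theorem g_odd (S : Sys a e t b g h) (n : ℕ) (ho : Odd (a (n + 1))) :
    b (n + 1) / 2 ≤ g (n + 1) ∧ g (n + 1) ≤ 3 / 2 * b (n + 1) := by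
  have hb := S.bnn (n + 1)
  obtain ⟨i1, i2⟩ := S.g_bd n
  rcases S.he (n + 1) with k | k
  · rw [S.gop n ho k]; constructor <;> nlinarith
  · rw [S.gom n ho k]; constructor <;> nlinarith

/-- crude bound for even `a_n` -/
theorem g_even (S : Sys a e t b g h) (n : ℕ) (ho : ¬ Odd (a (n + 1))) :
    -(b (n + 1) / 2) ≤ g (n + 1) ∧ g (n + 1) ≤ b (n + 1) / 2 := by
  have hb := S.bnn (n + 1)
  obtain ⟨i1, i2⟩ := S.g_bd n
  rcases S.he (n + 1) with k | k
  · rw [S.gep n ho k]; constructor <;> nlinarith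
  · rw [S.gem n ho k]; constructor <;> nlinarith

/-- one step of the `(3,3,3,…)` chain -/
theorem chain_step (S : Sys a e t b g h) {θ : ℝ} (hθ : θ * (3 + θ) = 1) (hθ1 : 302 / 1000 < θ)
    (_hθ2 : θ < 303 / 1000) (n : ℕ) (h3 : a (n + 1) = 3) (k : e (n + 1) = 1)
    (hP : g n ≤ (1 + b n) / 3 - |b n - θ| / 6) :
    g (n + 1) ≤ (1 + b (n + 1)) / 3 - |b (n + 1) - θ| / 2 := by
  have hb := S.bnn (n + 1)
  have r := S.brp n k
  rw [h3] at r
  push_cast at r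
  have hd : b (n + 1) - θ = b (n + 1) * θ * (-(b n - θ)) := by
    linear_combination θ * r - b (n + 1) * hθ
  have hab : |b (n + 1) - θ| = b (n + 1) * θ * |b n - θ| := by
    rw [hd, abs_mul, abs_neg, abs_of_nonneg (by positivity)]
  rw [S.gop n (odd3 h3) k, hab]
  have h0 := abs_nonneg (b n - θ)
  have e1 : b (n + 1) * g n ≤ b (n + 1) * ((1 + b n) / 3 - |b n - θ| / 6) :=
    mul_le_mul_of_nonneg_left hP hb
  have e2 : 0 ≤ b (n + 1) * |b n - θ| := mul_nonneg hb h0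
  nlinarith

theorem chain (S : Sys a e t b g h) {θ : ℝ} (hθ : θ * (3 + θ) = 1) (hθ1 : 302 / 1000 < θ)
    (hθ2 : θ < 303 / 1000) (n : ℕ) (h3 : a (n + 1) = 3) (k : e (n + 1) = 1) :
    g n ≤ (1 + b n) / 3 - |b n - θ| / 6 := by
  induction n with
  | zero =>
    rw [S.g0, S.b0, zero_sub, abs_neg, abs_of_pos (by linarith)]; linarith
  | succ n ih =>
    have hb := S.bnn (n + 1)
    have hb' := S.bnn n
    suffices hs : g (n + 1) ≤ (1 + b (n + 1)) / 3 - (b (n + 1) - θ) / 6 ∧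
        g (n + 1) ≤ (1 + b (n + 1)) / 3 + (b (n + 1) - θ) / 6 by
      rcases abs_cases (b (n + 1) - θ) with h | h <;> rw [h.1] <;> linarith [hs.1, hs.2]
    by_cases ho : Odd (a (n + 1))
    · have hg := S.g_odd n ho
      rcases odd_ge ho (S.ha _ (by omega)) with q3 | q5
      · rcases S.he (n + 1) with l | l
        · have := S.chain_step hθ hθ1 hθ2 n q3 l (ih q3 l)
          have h1 := le_abs_self (b (n + 1) - θ)
          have h2 := neg_le_abs (b (n + 1) - θ)
          constructor <;> linarith
        · have hgo := S.gom n ho l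
          have r := S.brm n l
          rw [q3] at r
          push_cast at r
          have hbh := S.b_half n l
          have hb4 : b (n + 1) ≤ 2 / 5 := S.b3 n (by omega)
          have hlow : 1 / 3 ≤ b (n + 1) := lb_of r hb (by linarith) (by norm_num)
          rcases n with _ | m
          · exact sgn_absurd S.he1 l
          by_cases ho' : Odd (a (m + 1))
          · have hg' := S.g_odd m ho'
            have := S.bnn (m + 1)
            constructor <;> nlinarith
          · rcases even_ge ho' (S.ha _ (by omega)) with q2 | q4
            · -- the block 2, -3, 3
              have c := S.c3 m q2 l
              have ht : t (m + 2) ≤ 2 / 5 := S.t3 (m + 2) h3.ge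
              have rt := S.trp (m + 1) k
              rw [q3] at rt
              push_cast at rt
              have htp := S.tpos (m + 1)
              have ht0 := S.tpos (m + 2)
              have hbm : 5 / 12 < b m := by
                have hlb := lb_of (D := 17 / 5) rt htp.le (by linarith) (by norm_num)
                norm_num at hlb
                have := S.bnn m
                by_contra hc
                push Not at hc
                nlinarith
              have hep : e (m + 1) = 1 := by
                rcases S.c1 m q2 with h' | h'
                · exact h'
                · exact sgn_absurd h' l
              have rb := S.brp m hep
              rw [q2] at rb
              push_cast at rb
              have hb2 := ub_of (D := 29 / 12) rb hb' (by linarith) (by norm_num)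
              norm_num at hb2
              have hgm : g m ≤ 310 / 1000 := by
                rcases m with _ | m
                · rw [S.g0]; norm_num
                rcases S.a_cases m with z | z
                · have := S.g_even m (not_odd2 z)
                  linarith [S.b_le (m + 1)]
                · linarith [S.b3 m z]
              have hge := S.gep m ho' hep
              have hg1 : -(1283 / 10000) ≤ g (m + 1) := by
                rw [hge]; nlinarith
              have hb5 := ub_of (D := 3 - 12 / 29) r hb (by linarith) (by norm_num)
              norm_num at hb5
              constructor <;> nlinarith
            · have hg' := S.g_even m ho'
              have hb2 := S.b_ub m 4 q4 (by norm_num)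
              norm_num at hb2
              have hb5 := ub_of (D := 3 - 2 / 7) r hb (by linarith) (by norm_num)
              norm_num at hb5
              constructor <;> nlinarith
      · have hb2 := S.b_ub n 5 q5 (by norm_num)
        norm_num at hb2
        constructor <;> linarith
    · have hg := S.g_even n ho
      have := S.b_le (n + 1)
      constructor <;> linarith

end Sys

namespace Sys

variable {a e : ℕ → ℤ} {t b g h : ℕ → ℝ}

theorem prod_lb {x y p q : ℝ} (hx : p ≤ x) (hy : q ≤ y) (hp : 0 ≤ p) (hq : 0 ≤ q) :
    p * q ≤ x * y := mul_le_mul hx hy hq (le_trans hp hx)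

theorem prod_ub {x y p q : ℝ} (hx : x ≤ p) (hy : y ≤ q) (hp : 0 ≤ p) (hy0 : 0 ≤ y) :
    x * y ≤ p * q := mul_le_mul hx hy hy0 hp

theorem c3_ub {T B : ℝ} (h : T * (1 + B) < B) (hB : B ≤ 388 / 1000) (hB0 : 0 ≤ B) :
    T < 28 / 100 := by
  by_contra hc
  push Not at hc
  nlinarith

theorem c2_lb {m B : ℝ} (h : B * (1 + m) ≤ m) (hB : 50 / 181 ≤ B) (hm1 : 0 < m) :
    3816 / 10000 < m := by nlinarith

set_option maxHeartbeats 1000000 in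
/-- One step of the descent on the right-hand side. -/
theorem descent_step (S : Sys a e t b g h) {r y : ℝ} (hr : r * r = 10) (hr1 : 31622 / 10000 < r)
    (hr2 : r < 31623 / 10000) (hy : y = (4 - r) / 3) (j : ℕ)
    (a1 : a (j + 1) = 4) (e1 : e (j + 1) = -1) (e2 : e (j + 2) = -1) (hbj : 38 / 100 ≤ b j)
    (hT : y + h j < t j) :
    a (j + 5) = 4 ∧ e (j + 5) = -1 ∧ e (j + 6) = -1 ∧ 38 / 100 ≤ b (j + 4) ∧
      y + h (j + 4) < t (j + 4) ∧ 2 * (t j - y) ≤ t (j + 4) - y := by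
  have hT0 := S.tpos j
  have hT1 := S.tlt j
  have hτ0 := S.tpos (j + 1)
  have hτ1 := S.tlt (j + 1)
  have hμ0 := S.tpos (j + 2)
  have hμ1 := S.tlt (j + 2)
  have hν0 := S.tpos (j + 3)
  have hν1 := S.tlt (j + 3)
  have hh0 := S.hnn j
  have hy0 : 0 < y := by rw [hy]; linarith
  have hyl : 2792 / 10000 < y := by rw [hy]; linarith
  -- first relation
  have q1 := S.trm j e2
  rw [a1] at q1
  push_cast at q1
  have y1 : y * (4 - (4 - r) / 2) = 1 := by rw [hy]; linear_combination (-1 / 6) * hr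
  have d1 : t j - y = t j * y * (t (j + 1) - (4 - r) / 2) := by
    linear_combination y * q1 - t j * y1
  have p1 : 0 < t j * y := mul_pos hT0 hy0
  have g1 : (4 - r) / 2 < t (j + 1) := by
    by_contra hc
    push Not at hc
    have : t j * y * (t (j + 1) - (4 - r) / 2) ≤ 0 :=
      mul_nonpos_of_nonneg_of_nonpos p1.le (by linarith)
    linarith
  have a2 : a (j + 2) = 2 := by
    rcases S.a_cases (j + 1) with z | z
    · exact z
    · linarith [S.t3 (j + 1) z]
  have e3 : e (j + 3) = 1 := by
    rcases S.c1 (j + 1) a2 with z | z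
    · exact sgn_absurd z e2
    · exact z
  have q2 := S.trp (j + 1) e3
  rw [a2] at q2
  push_cast at q2
  have y2 : (4 - r) / 2 * (2 + (r - 2) / 3) = 1 := by linear_combination (-1 / 6) * hr
  have d2 : t (j + 1) - (4 - r) / 2 = t (j + 1) * ((4 - r) / 2) * ((r - 2) / 3 - t (j + 2)) := by
    linear_combination (4 - r) / 2 * q2 - t (j + 1) * y2
  have s0 : 0 < (4 - r) / 2 := by linarith
  have p2 : 0 < t (j + 1) * ((4 - r) / 2) := mul_pos hτ0 s0
  have g2 : t (j + 2) < (r - 2) / 3 := by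
    by_contra hc
    push Not at hc
    have : t (j + 1) * ((4 - r) / 2) * ((r - 2) / 3 - t (j + 2)) ≤ 0 :=
      mul_nonpos_of_nonneg_of_nonpos p2.le (by linarith)
    linarith
  -- lower bound for t (j+2)
  have rb1 := S.brm j e1
  rw [a1] at rb1
  push_cast at rb1
  have hb1l := lb_of (D := 362 / 100) rb1 (S.bnn _) (by linarith) (by norm_num)
  norm_num at hb1l
  have c := S.c2 (j + 1) a2 e2
  have hμl : 3816 / 10000 < t (j + 2) := c2_lb c (by linarith) hμ0
  have hodd1 := S.hev j (not_odd4 a1)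
  have hodd2 := S.hev (j + 1) (not_odd2 a2)
  have hx0 : 0 < (r - 2) / 3 := by linarith
  have hPh : t j * t (j + 1) * h (j + 2) <
      t j * t (j + 1) * (y * ((4 - r) / 2) * ((r - 2) / 3 - t (j + 2))) := by
    have : h j = t j * t (j + 1) * h (j + 2) := by rw [hodd1, hodd2]; ring
    rw [← this]
    have : t j - y = t j * t (j + 1) * (y * ((4 - r) / 2) * ((r - 2) / 3 - t (j + 2))) := by
      rw [d1, d2]; ring
    linarith
  have hPh' : h (j + 2) < y * ((4 - r) / 2) * ((r - 2) / 3 - t (j + 2)) :=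
    lt_of_mul_lt_mul_left hPh (mul_pos hT0 hτ0).le
  have hPh2 : h (j + 2) < 1 / 100 := by
    have k1 : y * ((4 - r) / 2) ≤ 1 := by rw [hy]; linarith [hr]
    have k2 : y * ((4 - r) / 2) * ((r - 2) / 3 - t (j + 2)) ≤ 1 * ((r - 2) / 3 - t (j + 2)) :=
      mul_le_mul_of_nonneg_right k1 (by linarith)
    linarith
  have a3 : a (j + 3) = 2 := by
    by_cases ho : Odd (a (j + 3))
    · have := S.hod (j + 2) ho
      have h1 := S.hle (j + 3)
      have h2 := S.t_le (j + 3)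
      have h3 := prod_lb (y := 1 - h (j + 3)) (p := 38 / 100) (q := 38 / 100) 
        (le_of_lt (by linarith : 38 / 100 < t (j + 2))) (by linarith) (by norm_num) (by norm_num)
      linarith
    · rcases even_ge ho (S.ha _ (by omega)) with z | z
      · exact z
      · have := S.t_ub (j + 2) 4 z (by norm_num)
        norm_num at this
        linarith
  have e4 : e (j + 4) = 1 := by
    rcases S.he (j + 4) with z | z
    · exact z
    · have q := S.trm (j + 2) z
      rw [a3] at q
      push_cast at q
      have := lb_of (D := 2) q hμ0.le (by linarith) (by norm_num)
      linarith
  have q3 := S.trp (j + 2) e4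
  rw [a3] at q3
  push_cast at q3
  have y3 : (r - 2) / 3 * (2 + (r - 2) / 2) = 1 := by linear_combination (1 / 6) * hr
  have d3 : (r - 2) / 3 - t (j + 2) =
      t (j + 2) * ((r - 2) / 3) * (t (j + 3) - (r - 2) / 2) := by
    linear_combination t (j + 2) * y3 - (r - 2) / 3 * q3
  have p3 : 0 < t (j + 2) * ((r - 2) / 3) := mul_pos hμ0 hx0
  have g3 : (r - 2) / 2 < t (j + 3) := by
    by_contra hc
    push Not at hc
    have : t (j + 2) * ((r - 2) / 3) * (t (j + 3) - (r - 2) / 2) ≤ 0 :=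
      mul_nonpos_of_nonneg_of_nonpos p3.le (by linarith)
    linarith
  have a4 : a (j + 4) = 2 := by
    rcases S.a_cases (j + 3) with z | z
    · exact z
    · linarith [S.t3 (j + 3) z]
  have e5 : e (j + 5) = -1 := by
    rcases S.he (j + 5) with z | z
    · linarith [S.t2p (j + 3) z]
    · exact z
  have q4 := S.trm (j + 3) e5
  rw [a4] at q4
  push_cast at q4
  have y4 : (r - 2) / 2 * (2 - y) = 1 := by rw [hy]; linear_combination (1 / 6) * hr
  have d4 : t (j + 3) - (r - 2) / 2 = t (j + 3) * ((r - 2) / 2) * (t (j + 4) - y) := by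
    linear_combination (r - 2) / 2 * q4 - t (j + 3) * y4
  have n0 : 0 < (r - 2) / 2 := by linarith
  have p4 : 0 < t (j + 3) * ((r - 2) / 2) := mul_pos hν0 n0
  have g4 : y < t (j + 4) := by
    by_contra hc
    push Not at hc
    have : t (j + 3) * ((r - 2) / 2) * (t (j + 4) - y) ≤ 0 :=
      mul_nonpos_of_nonneg_of_nonpos p4.le (by linarith)
    linarith
  -- combine
  have hodd3 := S.hev (j + 2) (not_odd2 a3)
  have hodd4 := S.hev (j + 3) (not_odd2 a4)
  set P := t j * t (j + 1) * t (j + 2) * t (j + 3) with hP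
  set Q := y * ((4 - r) / 2) * ((r - 2) / 3) * ((r - 2) / 2) with hQ
  have hP0 : 0 < P := by positivity
  have hP1 : P ≤ 1 := by
    have m1 : t j * t (j + 1) ≤ 1 := mul_le_one₀ hT1.le hτ0.le hτ1.le
    have m2 : t (j + 2) * t (j + 3) ≤ 1 := mul_le_one₀ hμ1.le hν0.le hν1.le
    have : P = (t j * t (j + 1)) * (t (j + 2) * t (j + 3)) := by rw [hP]; ring
    rw [this]
    exact mul_le_one₀ m1 (by positivity) m2
  have hQ0 : 0 < Q := by rw [hQ]; positivity
  have hQ1 : Q ≤ 1 / 4 := by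
    have m1 : y * ((4 - r) / 2) ≤ 1 / 2 := by rw [hy]; linarith [hr]
    have m2 : ((r - 2) / 3) * ((r - 2) / 2) ≤ 1 / 2 := by linarith [hr]
    have m3 : 0 ≤ ((r - 2) / 3) * ((r - 2) / 2) := by positivity
    have m4 : 0 ≤ y * ((4 - r) / 2) := by positivity
    have : Q = (y * ((4 - r) / 2)) * (((r - 2) / 3) * ((r - 2) / 2)) := by rw [hQ]; ring
    rw [this]
    have := prod_ub m1 m2 (by norm_num) m3
    linarith
  have hTP : t j - y = P * (Q * (t (j + 4) - y)) := by
    rw [d1, d2, d3, d4, hP, hQ]; ring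
  have hhP : h j = P * h (j + 4) := by
    rw [hodd1, hodd2, hodd3, hodd4, hP]; ring
  have hlt : h (j + 4) < Q * (t (j + 4) - y) := by
    have : P * h (j + 4) < P * (Q * (t (j + 4) - y)) := by rw [← hTP, ← hhP]; linarith
    exact lt_of_mul_lt_mul_left this hP0.le
  have hQT : Q * (t (j + 4) - y) ≤ 1 / 4 * (t (j + 4) - y) :=
    mul_le_mul_of_nonneg_right hQ1 (by linarith)
  have hfin : y + h (j + 4) < t (j + 4) := by linarith
  have hfin2 : 2 * (t j - y) ≤ t (j + 4) - y := by
    have : P * (Q * (t (j + 4) - y)) ≤ 1 * (Q * (t (j + 4) - y)) :=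
      mul_le_mul_of_nonneg_right hP1 (mul_nonneg hQ0.le (by linarith))
    linarith
  -- reversed tails
  have rb2 := S.brm (j + 1) e2
  rw [a2] at rb2
  push_cast at rb2
  have hb2l := lb_of (D := 173 / 100) rb2 (S.bnn _) (by linarith) (by norm_num)
  norm_num at hb2l
  have rb3 := S.brp (j + 2) e3
  rw [a3] at rb3
  push_cast at rb3
  have hb3u := ub_of (D := 2 + 100 / 173) rb3 (S.bnn _) (by linarith) (by norm_num)
  norm_num at hb3u
  have rb4 := S.brp (j + 3) e4
  rw [a4] at rb4
  push_cast at rb4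
  have hb4l := lb_of (D := 24 / 10) rb4 (S.bnn _) (by linarith) (by norm_num)
  norm_num at hb4l
  have c3 := S.c3 (j + 3) a4 e5
  have hT4u : t (j + 4) < 28 / 100 := by
    exact c3_ub c3 (by linarith) (S.bnn _)
  have hT4p := S.tpos (j + 4)
  have hT5p := S.tpos (j + 5)
  have hT5l := S.tlt (j + 5)
  have a5 : a (j + 5) = 4 := by
    by_cases ho : Odd (a (j + 5))
    · have := S.hod (j + 4) ho
      have h1 := S.hle (j + 5)
      have h2 := S.t_le (j + 5)
      have h3 := prod_lb (y := 1 - h (j + 5)) (p := 27 / 100) (q := 38 / 100)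
        (le_of_lt (by linarith : 27 / 100 < t (j + 4))) (by linarith) (by norm_num) (by norm_num)
      linarith
    · rcases even_ge ho (S.ha _ (by omega)) with z | z
      · rcases S.he (j + 6) with w | w
        · have q := S.trp (j + 4) w
          rw [z] at q
          push_cast at q
          have := lb_of (D := 3) q hT4p.le (by linarith) (by norm_num)
          linarith
        · have q := S.trm (j + 4) w
          rw [z] at q
          push_cast at q
          have := lb_of (D := 3) q hT4p.le (by linarith) (by norm_num)
          linarith
      · by_contra hc
        have h5 : 5 ≤ a (j + 5) := by omega
        have := S.t_ub (j + 4) 5 h5 (by norm_num)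
        norm_num at this
        linarith
  have e6 : e (j + 6) = -1 := by
    rcases S.he (j + 6) with w | w
    · have := S.t_ubp (j + 4) 4 a5.ge (by norm_num) w
      norm_num at this
      linarith
    · exact w
  exact ⟨a5, e5, e6, by linarith, hfin, hfin2⟩

theorem descent (S : Sys a e t b g h) {r y : ℝ} (hr : r * r = 10) (hr1 : 31622 / 10000 < r)
    (hr2 : r < 31623 / 10000) (hy : y = (4 - r) / 3) (j : ℕ)
    (a1 : a (j + 1) = 4) (e1 : e (j + 1) = -1) (e2 : e (j + 2) = -1) (hbj : 38 / 100 ≤ b j) :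
    t j ≤ y + h j := by
  by_contra hc
  push Not at hc
  have key : ∀ n : ℕ, a (j + 4 * n + 1) = 4 ∧ e (j + 4 * n + 1) = -1 ∧ e (j + 4 * n + 2) = -1 ∧
      38 / 100 ≤ b (j + 4 * n) ∧ y + h (j + 4 * n) < t (j + 4 * n) ∧
      2 ^ n * (t j - y) ≤ t (j + 4 * n) - y := by
    intro n
    induction n with
    | zero => exact ⟨a1, e1, e2, hbj, hc, by simp⟩
    | succ n ih =>
      obtain ⟨i1, i2, i3, i4, i5, i6⟩ := ih
      obtain ⟨k1, k2, k3, k4, k5, k6⟩ := S.descent_step hr hr1 hr2 hy (j + 4 * n) i1 i2 i3 i4 i5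
      refine ⟨k1, k2, k3, k4, k5, ?_⟩
      have : (2 : ℝ) ^ (n + 1) * (t j - y) = 2 * (2 ^ n * (t j - y)) := by ring
      rw [this]
      exact le_trans (by linarith) k6
  have hpos : 0 < t j - y := by linarith [S.hnn j]
  obtain ⟨n, hn⟩ := pow_unbounded_of_one_lt (1 / (t j - y)) (by norm_num : (1 : ℝ) < 2)
  rw [div_lt_iff₀ hpos] at hn
  have := (key n).2.2.2.2.2
  have h1 := S.tlt (j + 4 * n)
  have hy0 : 0 < y := by rw [hy]; linarith
  linarith

end Sys

theorem fin_plus {c A d X T H : ℝ} (hc : c ≤ 159 / 1000) (hA : 0 ≤ A) (hd : A * d = 1)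
    (hd0 : 0 ≤ d) (hT : 0 ≤ T) (hm : 159 / 1000 * (d + T) ≤ X * (1 + T + H)) :
    c * (1 + A * T) ≤ A * X * (1 + T + H) := by
  have h1 : c * (1 + A * T) = A * (c * (d + T)) := by linear_combination (-c) * hd
  rw [h1, mul_assoc]
  refine mul_le_mul_of_nonneg_left (le_trans ?_ hm) hA
  exact mul_le_mul_of_nonneg_right hc (by linarith)

theorem fin_minus {c A d X T H : ℝ} (hc : c ≤ 159 / 1000) (hA : 0 ≤ A) (hd : A * d = 1)
    (hd0 : T ≤ d) (hm : 159 / 1000 * (d - T) ≤ X * (1 - T + H)) :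
    c * (1 - A * T) ≤ A * X * (1 - T + H) := by
  have h1 : c * (1 - A * T) = A * (c * (d - T)) := by linear_combination (-c) * hd
  rw [h1, mul_assoc]
  refine mul_le_mul_of_nonneg_left (le_trans ?_ hm) hA
  exact mul_le_mul_of_nonneg_right hc (by linarith)

/-- if `T ≤ T₀` then it is enough to check at `T₀` -/
theorem chk_minus {p q X T H T0 : ℝ} (hH : 0 ≤ H) (hX : 0 ≤ X) (hT : T ≤ T0)
    (hq : 159 / 1000 * q ≤ X)
    (hm : 159 / 1000 * (p - q * T0) ≤ X * (1 - T0)) :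
    159 / 1000 * (p - q * T) ≤ X * (1 - T + H) := by
  have h1 : 0 ≤ X * H := mul_nonneg hX hH
  have h2 : 0 ≤ (X - 159 / 1000 * q) * (T0 - T) :=
    mul_nonneg (by linarith) (by linarith)
  nlinarith

theorem easy_plus {c A U T H : ℝ} (hc : c ≤ 159 / 1000) (hA : 0 ≤ A) (hA1 : A ≤ 1) (hT : 0 ≤ T)
    (hH : 0 ≤ H) (hU : 159 / 1000 ≤ U) : c * (1 + A * T) ≤ U * (1 + T + H) := by
  have h1 : 0 ≤ A * T := mul_nonneg hA hT
  have h2 : A * T ≤ T := by nlinarith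
  calc c * (1 + A * T) ≤ 159 / 1000 * (1 + A * T) :=
        mul_le_mul_of_nonneg_right hc (by linarith)
    _ ≤ 159 / 1000 * (1 + T + H) := by linarith
    _ ≤ _ := mul_le_mul_of_nonneg_right hU (by linarith)

theorem easy_minus {c A U T H : ℝ} (hc : c ≤ 159 / 1000) (hA : 0 ≤ A) (hA1 : A ≤ 1) (hT : 0 ≤ T)
    (hT2 : T ≤ 1 / 2)
    (hH : 0 ≤ H) (hU : 318 / 1000 ≤ U) : c * (1 - A * T) ≤ U * (1 - T + H) := by
  have h1 : 0 ≤ A * T := mul_nonneg hA hT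
  have h2 : A * T ≤ T := by nlinarith
  calc c * (1 - A * T) ≤ 159 / 1000 * (1 - A * T) :=
        mul_le_mul_of_nonneg_right hc (by linarith)
    _ ≤ 318 / 1000 * (1 - T + H) := by linarith
    _ ≤ _ := mul_le_mul_of_nonneg_right hU (by linarith)

namespace Sys

variable {a e : ℕ → ℤ} {t b g h : ℕ → ℝ}

/-- `U` is large unless `a_i = 3`. -/
theorem U_easy (S : Sys a e t b g h) (m : ℕ) (hb : b (m + 1) < 1 / 2) (h3 : a (m + 1) ≠ 3) :
    318 / 1000 ≤ 1 - b (m + 1) - g (m + 1) := by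
  have hb0 := S.bnn (m + 1)
  by_cases ho : Odd (a (m + 1))
  · rcases odd_ge ho (S.ha _ (by omega)) with q | q
    · exact absurd q h3
    · have := S.g_odd m ho
      have h2 := S.b_ub m 5 q (by norm_num)
      norm_num at h2
      linarith
  · have hg := S.g_even m ho
    rcases even_ge ho (S.ha _ (by omega)) with q | q
    · rcases S.he (m + 1) with k | k
      · rw [S.gep m ho k]
        have := S.g_bd m
        nlinarith
      · have r := S.brm m k
        rw [q] at r; push_cast at r
        have := S.bnn m
        nlinarith
    · have h2 := S.b_ub m 4 q (by norm_num)
      norm_num at h2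
      linarith

/-- case `a_i = 3`, `ε_i = 1`, `ε_{i+1} = 1` -/
theorem case3pp (S : Sys a e t b g h) {c : ℝ} (hc : c ≤ 159 / 1000) (m : ℕ)
    (q : a (m + 1) = 3) (k : e (m + 1) = 1) :
    c * (1 + b (m + 1) * t (m + 1)) ≤
      (1 - b (m + 1) - g (m + 1)) * (1 + t (m + 1) + h (m + 1)) := by
  have r := S.brp m k
  rw [q] at r; push_cast at r
  have hU : 1 - b (m + 1) - g (m + 1) = b (m + 1) * (1 + b m - g m) := by
    rw [S.gop m (odd3 q) k]; linear_combination -r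
  refine easy_plus hc (S.bnn _) (S.blt _).le (S.tpos _).le (S.hnn _) ?_
  rw [hU]
  have h1 := S.bnn (m + 1)
  have h2 := S.bnn m
  have h3 := S.g_bd m
  have : b (m + 1) * (159 / 1000 * (3 + b m)) ≤ b (m + 1) * (1 + b m - g m) :=
    mul_le_mul_of_nonneg_left (by linarith) h1
  linarith

theorem case3pm (S : Sys a e t b g h) {c θ : ℝ} (hc : c ≤ 159 / 1000)
    (hθ : θ * (3 + θ) = 1) (hθ1 : 302 / 1000 < θ) (hθ2 : θ < 303 / 1000) (m : ℕ)
    (q : a (m + 1) = 3) (k : e (m + 1) = 1) (k2 : e (m + 2) = -1) :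
    c * (1 - b (m + 1) * t (m + 1)) ≤
      (1 - b (m + 1) - g (m + 1)) * (1 - t (m + 1) + h (m + 1)) := by
  have r := S.brp m k
  rw [q] at r; push_cast at r
  have hU : 1 - b (m + 1) - g (m + 1) = b (m + 1) * (1 + b m - g m) := by
    rw [S.gop m (odd3 q) k]; linear_combination -r
  rw [hU]
  have h1 := S.bnn (m + 1)
  have h2 := S.bnn m
  have h2' := S.blt m
  have h3 := S.g_bd m
  have hT1 := S.tlt (m + 1)
  have hT0 := S.tpos (m + 1)
  have hP := S.chain hθ hθ1 hθ2 m q k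
  have hX : 716 / 1000 + b m / 2 ≤ 1 + b m - g m := by
    have := neg_le_abs (b m - θ)
    linarith
  refine fin_minus hc h1 r (by linarith) ?_
  rcases S.a_cases (m + 1) with z | z
  · have k3 : e (m + 3) = 1 := by
      rcases S.c1 (m + 1) z with h' | h'
      · exact sgn_absurd h' k2
      · exact h'
    have c := S.c2 (m + 1) z k2
    have rt := S.trp (m + 1) k3
    have z' : a (m + 1 + 1) = 2 := z
    rw [z'] at rt; push_cast at rt
    have ht2 := S.tpos (m + 2)
    have c' : b (m + 1) * (1 + t (m + 2)) ≤ t (m + 2) := c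
    have rt' : t (m + 1) * (2 + t (m + 2)) = 1 := rt
    have u1 : 1 ≤ t (m + 2) * (2 + b m) := by
      have : b (m + 1) * (1 + t (m + 2)) * (3 + b m) ≤ t (m + 2) * (3 + b m) :=
        mul_le_mul_of_nonneg_right c' (by linarith)
      nlinarith
    have u2 : t (m + 1) ≤ (2 + b m) / (5 + 2 * b m) := by
      rw [le_div_iff₀ (by linarith)]
      have : t (m + 1) * 1 ≤ t (m + 1) * (t (m + 2) * (2 + b m)) :=
        mul_le_mul_of_nonneg_left u1 hT0.le
      nlinarith
    have := chk_minus (p := 3 + b m) (q := 1) (X := 1 + b m - g m) (S.hnn (m + 1)) (by linarith) u2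
      (by linarith) (by
        have e1 : 1 - (2 + b m) / (5 + 2 * b m) = (3 + b m) / (5 + 2 * b m) := by
          field_simp; ring
        have e2 : 3 + b m - 1 * ((2 + b m) / (5 + 2 * b m)) =
            (13 + 10 * b m + 2 * b m ^ 2) / (5 + 2 * b m) := by
          field_simp; ring
        rw [e1, e2, mul_div, mul_div]
        apply div_le_div_of_nonneg_right _ (by linarith)
        nlinarith)
    rwa [one_mul] at this
  · have u2 : t (m + 1) ≤ 2 / 5 := S.t3 (m + 1) z
    have := chk_minus (p := 3 + b m) (q := 1) (X := 1 + b m - g m) (S.hnn (m + 1)) (by linarith) u2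
      (by linarith) (by linarith)
    rwa [one_mul] at this

/-- common part of the case `a_i = 3`, `ε_i = -1` -/
theorem U3m (S : Sys a e t b g h) (m : ℕ) (q : a (m + 1) = 3) (k : e (m + 1) = -1) :
    b (m + 1) * (3 - b m) = 1 ∧
      1 - b (m + 1) - g (m + 1) = b (m + 1) * (1 - b m + g m) := by
  have r := S.brm m k
  rw [q] at r; push_cast at r
  refine ⟨r, ?_⟩
  rw [S.gom m (odd3 q) k]; linear_combination -r

/-- case `a_i = 3`, `ε_i = -1`, `a_{i-1} ≠ 2`, `ε_{i+1} = 1` -/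
theorem case3mp (S : Sys a e t b g h) {c : ℝ} (hc : c ≤ 159 / 1000) (m : ℕ)
    (q : a (m + 2) = 3) (k : e (m + 2) = -1) (hp : a (m + 1) ≠ 2) :
    c * (1 + b (m + 2) * t (m + 2)) ≤
      (1 - b (m + 2) - g (m + 2)) * (1 + t (m + 2) + h (m + 2)) := by
  obtain ⟨r, hU⟩ := S.U3m (m + 1) q k
  have hb := S.bnn (m + 2)
  have hb1 := S.bnn (m + 1)
  have hbh := S.b_half (m + 1) k
  refine easy_plus hc hb (S.blt _).le (S.tpos _).le (S.hnn _) ?_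
  have hX : 477 / 1000 ≤ 1 - b (m + 1) + g (m + 1) := by
    by_cases ho : Odd (a (m + 1))
    · have := S.g_odd m ho
      linarith
    · rcases even_ge ho (S.ha _ (by omega)) with z | z
      · exact absurd z hp
      · have h2 := S.b_ub m 4 z (by norm_num)
        norm_num at h2
        have := S.g_even m ho
        linarith
  have hU' : 1 - b (m + 2) - g (m + 2) = b (m + 2) * (1 - b (m + 1) + g (m + 1)) := hU
  have r' : b (m + 2) * (3 - b (m + 1)) = 1 := r
  rw [hU']
  nlinarith

/-- case `a_i = 3`, `ε_i = -1`, `a_{i-1} ≠ 2`, `ε_{i+1} = -1` -/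
theorem case3mm (S : Sys a e t b g h) {c : ℝ} (hc : c ≤ 159 / 1000) (m : ℕ)
    (q : a (m + 2) = 3) (k : e (m + 2) = -1) (k2 : e (m + 3) = -1) (hp : a (m + 1) ≠ 2) :
    c * (1 - b (m + 2) * t (m + 2)) ≤
      (1 - b (m + 2) - g (m + 2)) * (1 - t (m + 2) + h (m + 2)) := by
  obtain ⟨r, hU⟩ := S.U3m (m + 1) q k
  have hU' : 1 - b (m + 2) - g (m + 2) = b (m + 2) * (1 - b (m + 1) + g (m + 1)) := hU
  have r' : b (m + 2) * (3 - b (m + 1)) = 1 := r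
  have hb := S.bnn (m + 2)
  have hb1 := S.bnn (m + 1)
  have hbh := S.b_half (m + 1) k
  have hT0 := S.tpos (m + 2)
  have hTh := S.t_half (m + 2) k2
  rw [hU']
  refine fin_minus hc hb r' (by linarith) ?_
  by_cases ho : Odd (a (m + 1))
  · have := S.g_odd m ho
    have := chk_minus (p := 3 - b (m + 1)) (q := 1) (X := 1 - b (m + 1) + g (m + 1))
      (S.hnn (m + 2)) (by linarith) hTh (by linarith) (by linarith)
    rwa [one_mul] at this
  · rcases even_ge ho (S.ha _ (by omega)) with z | z
    · exact absurd z hp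
    have hX : b (m + 1) ≤ 2 / 7 ∧ 625 / 1000 + 5 / 4 * (1 / 4 - b (m + 1)) ≤
        1 - b (m + 1) + g (m + 1) ∧ (b (m + 1) ≤ 1 / 4 ∨ 642 / 1000 ≤
        1 - b (m + 1) + g (m + 1)) := by
      have h2 := S.b_ub m 4 z (by norm_num)
      norm_num at h2
      rcases S.he (m + 1) with l | l
      · have h4 := S.b_ubp m 4 z (by norm_num) l
        push_cast at h4
        have := S.g_even m ho
        refine ⟨h2, by linarith, Or.inl h4⟩
      · have h4 := S.gem m ho l
        have := S.g_bd m
        have : -(b (m + 1) / 4) ≤ g (m + 1) := by rw [h4]; nlinarith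
        refine ⟨h2, by linarith, Or.inr (by linarith)⟩
    obtain ⟨x1, x2, x3⟩ := hX
    rcases S.a_cases (m + 2) with y | y
    · have k3 : e (m + 4) = 1 := by
        rcases S.c1 (m + 2) y with h' | h'
        · exact sgn_absurd h' k2
        · exact h'
      have c' : b (m + 2) * (1 + t (m + 3)) ≤ t (m + 3) := S.c2 (m + 2) y k2
      have rt := S.trp (m + 2) k3
      have y' : a (m + 2 + 1) = 2 := y
      rw [y'] at rt; push_cast at rt
      have ht2 := S.tpos (m + 3)
      have rt' : t (m + 2) * (2 + t (m + 3)) = 1 := rt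
      have u1 : 1 ≤ t (m + 3) * (2 - b (m + 1)) := by
        have : b (m + 2) * (1 + t (m + 3)) * (3 - b (m + 1)) ≤ t (m + 3) * (3 - b (m + 1)) :=
          mul_le_mul_of_nonneg_right c' (by linarith)
        nlinarith
      have u2 : t (m + 2) ≤ (2 - b (m + 1)) / (5 - 2 * b (m + 1)) := by
        rw [le_div_iff₀ (by linarith)]
        have : t (m + 2) * 1 ≤ t (m + 2) * (t (m + 3) * (2 - b (m + 1))) :=
          mul_le_mul_of_nonneg_left u1 hT0.le
        nlinarith
      have hpos : 0 < 5 - 2 * b (m + 1) := by linarith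
      have := chk_minus (p := 3 - b (m + 1)) (q := 1) (X := 1 - b (m + 1) + g (m + 1))
        (S.hnn (m + 2)) (by linarith) u2 (by linarith) (by
          have e1 : 1 - (2 - b (m + 1)) / (5 - 2 * b (m + 1)) =
              (3 - b (m + 1)) / (5 - 2 * b (m + 1)) := by
            field_simp; ring
          have e2 : 3 - b (m + 1) - 1 * ((2 - b (m + 1)) / (5 - 2 * b (m + 1))) =
              (13 - 10 * b (m + 1) + 2 * b (m + 1) ^ 2) / (5 - 2 * b (m + 1)) := by
            rw [eq_div_iff hpos.ne', one_mul, sub_mul, div_mul_cancel₀ _ hpos.ne']; ring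
          rw [e1, e2, mul_div, mul_div]
          apply div_le_div_of_nonneg_right _ hpos.le
          rcases x3 with x3 | x3 <;> nlinarith)
      rwa [one_mul] at this
    · have u2 : t (m + 2) ≤ 2 / 5 := S.t3 (m + 2) y
      have := chk_minus (p := 3 - b (m + 1)) (q := 1) (X := 1 - b (m + 1) + g (m + 1))
        (S.hnn (m + 2)) (by linarith) u2
        (by linarith) (by rcases x3 with x3 | x3 <;> linarith)
      rwa [one_mul] at this

end Sys

namespace Sys

variable {a e : ℕ → ℤ} {t b g h : ℕ → ℝ}

/-- reduction of the case `a_{i-1} = 2`, `a_i = -3` -/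
theorem U23 (S : Sys a e t b g h) (m : ℕ) (p : a (m + 1) = 2) (q : a (m + 2) = 3)
    (k : e (m + 2) = -1) :
    e (m + 1) = 1 ∧ b (m + 1) * (2 + b m) = 1 ∧ b (m + 2) * (b (m + 1) * (5 + 3 * b m)) = 1 ∧
      1 - b (m + 2) - g (m + 2) = b (m + 2) * (b (m + 1) * (1 + b m - g m)) := by
  have k1 : e (m + 1) = 1 := by
    rcases S.c1 m p with h' | h'
    · exact h'
    · exact sgn_absurd h' k
  have r := S.brp m k1
  rw [p] at r; push_cast at r
  obtain ⟨r2, hU⟩ := S.U3m (m + 1) q k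
  have r2' : b (m + 2) * (3 - b (m + 1)) = 1 := r2
  have hU' : 1 - b (m + 2) - g (m + 2) = b (m + 2) * (1 - b (m + 1) + g (m + 1)) := hU
  have hg := S.gep m (not_odd2 p) k1
  refine ⟨k1, r, ?_, ?_⟩
  · linear_combination r2' + 3 * b (m + 2) * r
  · rw [hU', hg]; linear_combination -(b (m + 2)) * r

theorem case23p (S : Sys a e t b g h) {c : ℝ} (hc : c ≤ 159 / 1000) (m : ℕ)
    (p : a (m + 1) = 2) (q : a (m + 2) = 3) (k : e (m + 2) = -1) (k2 : e (m + 3) = 1) :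
    c * (1 + b (m + 2) * t (m + 2)) ≤
      (1 - b (m + 2) - g (m + 2)) * (1 + t (m + 2) + h (m + 2)) := by
  obtain ⟨k1, r, r2, hU⟩ := S.U23 m p q k
  have hb0 := S.bnn m
  have hb1 := S.bnn (m + 1)
  have hb2 := S.bnn (m + 2)
  have hT0 := S.tpos (m + 2)
  have hT1 := S.tlt (m + 2)
  have hH := S.hnn (m + 2)
  have c3 := S.c3 m p k
  have rt := S.trp (m + 1) k2
  have q' : a (m + 1 + 1) = 3 := q
  rw [q'] at rt; push_cast at rt
  have rt' : t (m + 1) * (3 + t (m + 2)) = 1 := rt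
  have hbT : 1 < b m * (2 + t (m + 2)) := by
    have := mul_lt_mul_of_pos_right c3 (show 0 < 3 + t (m + 2) by linarith)
    nlinarith
  have hbl : 1 / 3 < b m := by nlinarith
  rw [hU]
  refine fin_plus hc hb2 r2 (by positivity) hT0.le ?_
  have hgb := S.g_bd m
  have key : 159 / 1000 * (5 + 3 * b m + (2 + b m) * t (m + 2)) ≤
      (1 + b m - g m) * (1 + t (m + 2) + h (m + 2)) := by
    have hxh : 0 ≤ (1 + b m - g m) * h (m + 2) := mul_nonneg (by linarith) hH
    suffices hs : 159 / 1000 * (5 + 3 * b m + (2 + b m) * t (m + 2)) ≤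
      (1 + b m - g m) * (1 + t (m + 2)) by linarith
    rcases m with _ | m
    · rw [S.b0] at hbl; norm_num at hbl
    rcases S.a_cases m with z | z
    · have := S.g_even m (not_odd2 z)
      have hh : 0 ≤ ((1 + b (m + 1) - g (m + 1)) - 159 / 1000 * (2 + b (m + 1))) * t (m + 1 + 2) :=
        mul_nonneg (by linarith) hT0.le
      linarith
    · have hb4 := S.b3 m z
      have hTl : 1 / 2 ≤ t (m + 1 + 2) := by nlinarith
      have hh : 0 ≤ ((1 + b (m + 1) - g (m + 1)) - 159 / 1000 * (2 + b (m + 1))) *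
          (t (m + 1 + 2) - 1 / 2) :=
        mul_nonneg (by linarith) (by linarith)
      linarith
  have e1 : 159 / 1000 * (b (m + 1) * (5 + 3 * b m) + t (m + 2)) =
      b (m + 1) * (159 / 1000 * (5 + 3 * b m + (2 + b m) * t (m + 2))) := by
    linear_combination (-(159 / 1000) * t (m + 2)) * r
  rw [e1, mul_assoc]
  exact mul_le_mul_of_nonneg_left key hb1

/-- the left-hand linear bound before a partial quotient `-2` -/
theorem claimL (S : Sys a e t b g h) {r θ R : ℝ} (hr1 : 31622 / 10000 < r)
    (hr2 : r < 31623 / 10000) (hθ : θ * (3 + θ) = 1) (hθ1 : 302 / 1000 < θ)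
    (hθ2 : θ < 303 / 1000) (hR : R * ((11 - r) / 3 - θ) = (8 - 4 * θ) / 3)
    (n : ℕ) (p : a (n + 1) = 2) (k : e (n + 1) = -1) :
    R * ((11 - r) / 3 - b n) ≤ 3 - b n - g n := by
  have hRu : R < 981 / 1000 := by nlinarith
  have hRl : 979 / 1000 < R := by nlinarith
  have hw := S.gold_b n p k
  have hw0 := S.bnn n
  have hval : R * ((11 - r) / 3 - b n) = (8 - 4 * θ) / 3 + R * (θ - b n) := by
    linear_combination hR
  -- crude version
  have crude : g n ≤ 432 / 1000 → R * ((11 - r) / 3 - b n) ≤ 3 - b n - g n := by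
    intro hg
    rw [hval]
    nlinarith
  rcases n with _ | n
  · apply crude; rw [S.g0]; norm_num
  by_cases ho : Odd (a (n + 1))
  · have hgo := S.g_odd n ho
    rcases odd_ge ho (S.ha _ (by omega)) with q | q
    · rcases S.he (n + 1) with l | l
      · have hc := S.chain_step hθ hθ1 hθ2 n q l (S.chain hθ hθ1 hθ2 n q l)
        rw [hval]
        rcases abs_cases (b (n + 1) - θ) with ⟨h1, h2⟩ | ⟨h1, h2⟩ <;> rw [h1] at hc <;> nlinarith
      · apply crude
        rw [S.gom n ho l]
        have rb := S.brm n l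
        rw [q] at rb; push_cast at rb
        rcases n with _ | n
        · exact sgn_absurd S.he1 l
        have hgb := S.g_bd (n + 1)
        by_cases ho' : Odd (a (n + 1))
        · have := S.g_odd n ho'
          have := S.bnn (n + 1)
          nlinarith
        · rcases even_ge ho' (S.ha _ (by omega)) with z | z
          · exfalso
            have le1 : e (n + 1) = 1 := by
              rcases S.c1 n z with h' | h'
              · exact h'
              · exact sgn_absurd h' l
            exact S.c5 n ⟨z, le1, q, l, p, k⟩
          · have h2 := S.b_ub n 4 z (by norm_num)
            norm_num at h2
            have := S.g_even n ho'
            have h5 := ub_of (D := 3 - 2 / 7) rb hw0 (by linarith) (by norm_num)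
            norm_num at h5
            nlinarith
    · have h2 := S.b_ub n 5 q (by norm_num)
      norm_num at h2
      apply crude
      linarith
  · have hge := S.g_even n ho
    apply crude
    linarith

set_option maxHeartbeats 2000000 in
theorem case23m (S : Sys a e t b g h) {c r θ R : ℝ} (hc : c ≤ 159 / 1000)
    (hcR : c = (r - 3) * R) (hr : r * r = 10) (hr1 : 31622 / 10000 < r)
    (hr2 : r < 31623 / 10000) (hθ : θ * (3 + θ) = 1) (hθ1 : 302 / 1000 < θ)
    (hθ2 : θ < 303 / 1000) (hR : R * ((11 - r) / 3 - θ) = (8 - 4 * θ) / 3) (m : ℕ)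
    (p : a (m + 1) = 2) (q : a (m + 2) = 3) (k : e (m + 2) = -1) (k2 : e (m + 3) = -1) :
    c * (1 - b (m + 2) * t (m + 2)) ≤
      (1 - b (m + 2) - g (m + 2)) * (1 - t (m + 2) + h (m + 2)) := by
  obtain ⟨k1, r1, r2, hU⟩ := S.U23 m p q k
  have hb0 := S.bnn m
  have hb1 := S.bnn (m + 1)
  have hb2 := S.bnn (m + 2)
  have hT0 := S.tpos (m + 2)
  have hT1 := S.tlt (m + 2)
  have hH := S.hnn (m + 2)
  have hHT := S.hle (m + 2)
  have c3 := S.c3 m p k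
  have rt := S.trm (m + 1) k2
  have q' : a (m + 1 + 1) = 3 := q
  rw [q'] at rt; push_cast at rt
  have rt' : t (m + 1) * (3 - t (m + 2)) = 1 := rt
  have hbT : 1 < b m * (2 - t (m + 2)) := by
    have := mul_lt_mul_of_pos_right c3 (show 0 < 3 - t (m + 2) by linarith)
    nlinarith
  have hbl : 1 / 2 < b m := by nlinarith
  rcases m with _ | n
  · rw [S.b0] at hbl; norm_num at hbl
  have z : a (n + 1) = 2 := by
    rcases S.a_cases n with z | z
    · exact z
    · linarith [S.b3 n z]
  have l : e (n + 1) = -1 := by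
    rcases S.he (n + 1) with l | l
    · linarith [S.b2p n l]
    · exact l
  have hL := S.claimL hr1 hr2 hθ hθ1 hθ2 hR n z l
  have hw := S.gold_b n z l
  have hw0 := S.bnn n
  have r0 := S.brm n l
  rw [z] at r0; push_cast at r0
  have hg := S.gem n (not_odd2 z) l
  rw [show n + 1 + 2 = n + 3 by rfl] at *
  rw [show n + 1 + 1 = n + 2 by rfl] at *
  have hTw : t (n + 3) < b n := by nlinarith
  have s1 : b (n + 2) * b (n + 1) * (5 - 2 * b n) = 1 := by
    linear_combination r1 + 2 * b (n + 2) * r0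
  have s2 : b (n + 3) * (b (n + 2) * b (n + 1) * (13 - 5 * b n)) = 1 := by
    linear_combination r2 + 5 * b (n + 3) * b (n + 2) * r0
  have s3 : 1 - b (n + 3) - g (n + 3) =
      b (n + 3) * (b (n + 2) * b (n + 1)) * (3 - b n - g n) := by
    rw [hU, hg]; linear_combination -(b (n + 3) * b (n + 2)) * r0
  have s4 : b (n + 3) * (13 - 5 * b n) = 5 - 2 * b n := by
    linear_combination (5 - 2 * b n) * s2 - b (n + 3) * (13 - 5 * b n) * s1
  have hA : 38 / 100 ≤ b (n + 3) := by
    by_contra hcon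
    push Not at hcon
    nlinarith
  have hRu : R < 981 / 1000 := by nlinarith
  have hRl : 979 / 1000 < R := by nlinarith
  have hX : 979 / 1000 * (26125 / 10000 - b n) ≤ 3 - b n - g n := by
    refine le_trans ?_ hL
    have : (26125 / 10000 - b n) ≤ (11 - r) / 3 - b n := by linarith
    exact mul_le_mul hRl.le this (by linarith) (by linarith)
  -- the reduced inequality
  suffices key : c * (13 - 5 * b n - (5 - 2 * b n) * t (n + 3)) ≤
      (3 - b n - g n) * (1 - t (n + 3) + h (n + 3)) by
    rw [s3]
    have e1 : c * (1 - b (n + 3) * t (n + 3)) = b (n + 3) * (b (n + 2) * b (n + 1)) *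
        (c * (13 - 5 * b n - (5 - 2 * b n) * t (n + 3))) := by
      linear_combination (-c) * s2 + c * t (n + 3) * b (n + 3) * s1
    rw [e1, mul_assoc (b (n + 3) * (b (n + 2) * b (n + 1)))]
    exact mul_le_mul_of_nonneg_left key (mul_nonneg hb2 (mul_nonneg hb1 hb0))
  have hdpos : 0 ≤ 13 - 5 * b n - (5 - 2 * b n) * t (n + 3) := by nlinarith
  have k4 : e (n + 4) = -1 := k2
  by_cases a4 : a (n + 4) = 4 ∧ e (n + 5) = -1
  · obtain ⟨a4, e5⟩ := a4
    have hD := S.descent hr hr1 hr2 rfl (n + 3) a4 k4 e5 hA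
    rw [hcR]
    have hpos : 0 ≤ 1 - t (n + 3) + h (n + 3) := by linarith
    refine le_trans ?_ (mul_le_mul_of_nonneg_right hL hpos)
    rw [show (r - 3) * R * (13 - 5 * b n - (5 - 2 * b n) * t (n + 3)) =
      R * ((r - 3) * (13 - 5 * b n - (5 - 2 * b n) * t (n + 3))) by ring, mul_assoc R]
    refine mul_le_mul_of_nonneg_left ?_ (by linarith)
    -- value at T = y and slope
    have id1 : (r - 3) * (13 - 5 * b n - (5 - 2 * b n) * t (n + 3)) =
        ((11 - r) / 3 - b n) * (1 - (4 - r) / 3) +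
          (r - 3) * (5 - 2 * b n) * ((4 - r) / 3 - t (n + 3)) := by
      linear_combination ((5 - 2 * b n) / 3 + 1 / 9) * hr
    rw [id1]
    have hs : (r - 3) * (5 - 2 * b n) ≤ (11 - r) / 3 - b n := by nlinarith
    have hs0 : 0 ≤ (r - 3) * (5 - 2 * b n) := mul_nonneg (by linarith) (by linarith)
    have hK : 0 ≤ (11 - r) / 3 - b n := by linarith
    rcases le_total (t (n + 3)) ((4 - r) / 3) with hy | hy
    · have e1 := mul_nonneg (sub_nonneg.2 hs) (sub_nonneg.2 hy)
      have e2 := mul_nonneg hK hH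
      linarith
    · have e1 := mul_nonneg hs0 (sub_nonneg.2 hy)
      have e2 : 0 ≤ ((11 - r) / 3 - b n) * ((4 - r) / 3 + h (n + 3) - t (n + 3)) :=
        mul_nonneg hK (by linarith)
      linarith
  · refine le_trans (mul_le_mul_of_nonneg_right hc hdpos) ?_
    rcases S.a_cases (n + 3) with y2 | y3
    · exact absurd ⟨p, k1, q, k, y2, k2⟩ (S.c5 (n + 1))
    have y3' : 3 ≤ a (n + 4) := y3
    have : a (n + 4) = 3 ∨ a (n + 4) = 4 ∨ 5 ≤ a (n + 4) := by omega
    rcases this with y | y | y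
    · have hh : h (n + 3) = t (n + 3) * (1 - h (n + 4)) := S.hod (n + 3) (odd3 y)
      have hh4 : h (n + 4) ≤ 6181 / 10000 := (S.hle _).trans (S.t_le _)
      have ht4 := S.t_le (n + 4)
      have htp4 := S.tpos (n + 4)
      have hTl : 276 / 1000 ≤ t (n + 3) := by
        have : 1 / (36181 / 10000 : ℝ) ≤ t (n + 3) := by
          rcases S.he (n + 5) with v | v
          · have rr := S.trp (n + 3) v
            rw [show n + 3 + 1 = n + 4 by rfl, y] at rr; push_cast at rr
            exact lb_of rr hT0.le (by linarith) (by norm_num)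
          · have rr := S.trm (n + 3) v
            rw [show n + 3 + 1 = n + 4 by rfl, y] at rr; push_cast at rr
            exact lb_of rr hT0.le (by linarith) (by norm_num)
        norm_num at this
        linarith
      have hlow : 763 / 1000 ≤ 1 - t (n + 3) + h (n + 3) := by
        have : t (n + 3) * h (n + 4) ≤ 382 / 1000 * (6181 / 10000) :=
          mul_le_mul (by linarith) hh4 (S.hnn _) (by norm_num)
        rw [hh]; linarith
      have e1 : 979 / 1000 * (26125 / 10000 - b n) * (763 / 1000) ≤
          (3 - b n - g n) * (1 - t (n + 3) + h (n + 3)) :=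
        mul_le_mul hX hlow (by norm_num) (by linarith)
      have e2 : (5 - 2 * b n) * (276 / 1000) ≤ (5 - 2 * b n) * t (n + 3) :=
        mul_le_mul_of_nonneg_left hTl (by linarith)
      linarith
    · have v : e (n + 5) = 1 := by
        rcases S.he (n + 5) with v | v
        · exact v
        · exact absurd ⟨y, v⟩ a4
      have hT4 := S.t_ubp (n + 3) 4 (show 4 ≤ a (n + 3 + 1) from y.ge) (by norm_num) v
      push_cast at hT4
      exact chk_minus hH (by linarith) hT4 (by linarith) (by linarith)
    · have hT4 := S.t_ub (n + 3) 5 y (by norm_num)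
      norm_num at hT4
      exact chk_minus hH (by linarith) hT4 (by linarith) (by linarith)

/-- the main inequality -/
theorem main (S : Sys a e t b g h) {c r θ R : ℝ} (hc : c ≤ 159 / 1000)
    (hcR : c = (r - 3) * R) (hr : r * r = 10) (hr1 : 31622 / 10000 < r)
    (hr2 : r < 31623 / 10000) (hθ : θ * (3 + θ) = 1) (hθ1 : 302 / 1000 < θ)
    (hθ2 : θ < 303 / 1000) (hR : R * ((11 - r) / 3 - θ) = (8 - 4 * θ) / 3) (i : ℕ)
    (hi : 1 ≤ i) (hb : b i < 1 / 2) :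
    c * (1 + (e (i + 1) : ℝ) * b i * t i) ≤
      (1 - b i - g i) * (1 + (e (i + 1) : ℝ) * t i + h i) := by
  obtain ⟨m, rfl⟩ : ∃ m, i = m + 1 := ⟨i - 1, by omega⟩
  suffices hs : (e (m + 2) = 1 → c * (1 + b (m + 1) * t (m + 1)) ≤
      (1 - b (m + 1) - g (m + 1)) * (1 + t (m + 1) + h (m + 1))) ∧
      (e (m + 2) = -1 → c * (1 - b (m + 1) * t (m + 1)) ≤
      (1 - b (m + 1) - g (m + 1)) * (1 - t (m + 1) + h (m + 1))) by
    rcases S.he (m + 2) with k | k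
    · have := hs.1 k
      rw [show m + 1 + 1 = m + 2 by rfl, k]
      push_cast
      convert this using 3 <;> ring
    · have := hs.2 k
      rw [show m + 1 + 1 = m + 2 by rfl, k]
      push_cast
      convert this using 3 <;> ring
  have hA := S.bnn (m + 1)
  have hA1 := (S.blt (m + 1)).le
  have hT := (S.tpos (m + 1)).le
  have hH := S.hnn (m + 1)
  by_cases q : a (m + 1) = 3
  · rcases S.he (m + 1) with k | k
    · exact ⟨fun _ => S.case3pp hc m q k, fun k2 => S.case3pm hc hθ hθ1 hθ2 m q k k2⟩
    · rcases m with _ | m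
      · exact sgn_absurd S.he1 k
      by_cases p : a (m + 1) = 2
      · exact ⟨fun k2 => S.case23p hc m p q k k2,
          fun k2 => S.case23m hc hcR hr hr1 hr2 hθ hθ1 hθ2 hR m p q k k2⟩
      · exact ⟨fun k2 => S.case3mp hc m q k p, fun k2 => S.case3mm hc m q k k2 p⟩
  · have hU := S.U_easy m hb q
    exact ⟨fun _ => easy_plus hc hA hA1 hT hH (by linarith),
      fun k2 => easy_minus hc hA hA1 hT (S.t_half (m + 1) k2) hH hU⟩

end Sys

theorem qs_mono (a e : ℕ → ℤ) (ha : ∀ i, 1 ≤ i → 2 ≤ a i) (he : ∀ i, e i = 1 ∨ e i = -1)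
    (n : ℕ) : 0 < qs a e n ∧ qs a e n < qs a e (n + 1) := by
  induction n with
  | zero =>
    have := ha 1 le_rfl
    simp only [qs]
    omega
  | succ n ih =>
    obtain ⟨h1, h2⟩ := ih
    refine ⟨by omega, ?_⟩
    have h3 := ha (n + 2) (by omega)
    have h4 : qs a e (n + 2) = a (n + 2) * qs a e (n + 1) + e (n + 2) * qs a e n := by
      rw [qs]
    rw [show n + 1 + 1 = n + 2 by rfl, h4]
    rcases he (n + 2) with k | k <;> rw [k] <;> nlinarith

namespace ANIE

variable {α : ℝ}

theorem q_pos (E : ANIE α) (n : ℕ) : (0 : ℝ) < qs E.a E.e n := by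
  exact_mod_cast (qs_mono E.a E.e E.ha E.he n).1

theorem abar_zero (E : ANIE α) : E.abar 0 = 0 := by simp [abar, ab]

theorem abar_succ (E : ANIE α) (n : ℕ) :
    E.abar (n + 1) = (qs E.a E.e n : ℝ) / (qs E.a E.e (n + 1) : ℝ) := by
  simp [abar, ab]

theorem abar_rec (E : ANIE α) (n : ℕ) :
    E.abar (n + 1) * ((E.a (n + 1) : ℝ) + (E.e (n + 1) : ℝ) * E.abar n) = 1 := by
  rcases n with _ | n
  · have h := E.q_pos 1
    rw [abar_succ, abar_zero]
    have h1 : (qs E.a E.e (0 + 1) : ℝ) = E.a 1 := by norm_num [qs]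
    have h0 : (qs E.a E.e 0 : ℝ) = 1 := by norm_num [qs]
    have h2 : (qs E.a E.e 1 : ℝ) = E.a 1 := h1
    rw [h1, h0]
    rw [h2] at h
    simp only [zero_add, mul_zero, add_zero]
    field_simp
  · have h1 := E.q_pos (n + 1)
    have h2 := E.q_pos (n + 2)
    rw [abar_succ, abar_succ]
    have h4 : (qs E.a E.e (n + 2) : ℝ) =
        E.a (n + 2) * qs E.a E.e (n + 1) + E.e (n + 2) * qs E.a E.e n := by
      rw [qs]; push_cast; ring
    rw [show n + 1 + 1 = n + 2 by rfl, div_mul_eq_mul_div, div_eq_one_iff_eq h2.ne', h4]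
    field_simp

theorem t_rec (E : ANIE α) (n : ℕ) :
    E.t n * ((E.a (n + 1) : ℝ) + (E.e (n + 2) : ℝ) * E.t (n + 1)) = 1 := by
  have h := E.hrec n
  have hp := E.htpos n
  have hne : (E.a (n + 1) : ℝ) + (E.e (n + 2) : ℝ) * E.t (n + 1) ≠ 0 := by
    intro h0
    rw [h0] at h
    norm_num at h
    linarith
  rw [h]
  exact one_div_mul_cancel hne

theorem sys0 (E : ANIE α) (h12 : α < 1 / 2) : Sys0 E.a E.e E.t E.abar where
  ha := E.ha
  he := E.he
  he1 := E.he1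
  tpos := E.htpos
  tlt := E.htlt1
  b0 := E.abar_zero
  bnn := by
    intro n
    rcases n with _ | n
    · rw [abar_zero]
    · rw [abar_succ]
      exact div_nonneg (E.q_pos _).le (E.q_pos _).le
  blt := by
    intro n
    rcases n with _ | n
    · rw [abar_zero]; norm_num
    · rw [abar_succ, div_lt_one (E.q_pos _)]
      exact_mod_cast (qs_mono E.a E.e E.ha E.he n).2
  trp := by
    intro n k
    have := E.t_rec n
    rw [k] at this; push_cast at this; rwa [one_mul] at this
  trm := by
    intro n k
    have := E.t_rec n
    rw [k] at this; push_cast at this; rwa [neg_one_mul, ← sub_eq_add_neg] at this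
  brp := by
    intro n k
    have := E.abar_rec n
    rw [k] at this; push_cast at this; rwa [one_mul] at this
  brm := by
    intro n k
    have := E.abar_rec n
    rw [k] at this; push_cast at this; rwa [neg_one_mul, ← sub_eq_add_neg] at this
  c1 := fun n h => E.hcond1 (n + 1) (by omega) h
  c2 := by
    intro n h k
    have hc := E.hcond2 (n + 1) (by omega) h k
    rcases n with _ | n
    · exact sgn_absurd E.he1 k
    have hb : 0 < E.abar (n + 1) := by
      rw [abar_succ]; exact div_pos (E.q_pos _) (E.q_pos _)
    have ht := E.htpos (n + 1 + 1)
    have hc' : 1 / E.abar (n + 1) - 1 / E.t (n + 1 + 1) ≥ 1 := hc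
    have e1 : E.t (n + 1 + 1) - E.abar (n + 1) * (1 + E.t (n + 1 + 1)) =
        (1 / E.abar (n + 1) - 1 / E.t (n + 1 + 1) - 1) *
          (E.abar (n + 1) * E.t (n + 1 + 1)) := by
      field_simp; ring
    have := mul_nonneg (sub_nonneg.2 hc') (mul_pos hb ht).le
    linarith
  c3 := by
    intro n h k
    have hc := E.hcond3 (n + 1) (by omega) h k
    rcases n with _ | n
    · exfalso
      have := E.t_rec 0
      rw [k, h, E.ht0] at this
      push_cast at this
      have h1 := E.htpos (0 + 1)
      have h2 := E.htlt1 (0 + 1)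
      nlinarith
    have hb : 0 < E.abar (n + 1) := by
      rw [abar_succ]; exact div_pos (E.q_pos _) (E.q_pos _)
    have ht := E.htpos (n + 1 + 1)
    have hc' : 1 / E.t (n + 1 + 1) - 1 / E.abar (n + 1) > 1 := hc
    have e1 : E.abar (n + 1) - E.t (n + 1 + 1) * (1 + E.abar (n + 1)) =
        (1 / E.t (n + 1 + 1) - 1 / E.abar (n + 1) - 1) *
          (E.abar (n + 1) * E.t (n + 1 + 1)) := by
      field_simp; ring
    have := mul_pos (sub_pos.2 hc') (mul_pos hb ht)
    linarith
  c4 := by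
    rintro n ⟨h1, h2, h3, h4⟩
    refine E.hcond4 (n + 1) 0 (by omega) ⟨by rw [h1, h2]; norm_num, fun j hj => by omega, ?_⟩
    rw [show n + 1 + 1 + 0 = n + 2 by rfl, h3, h4]; norm_num
  c5 := by
    rintro n ⟨h1, h2, h3, h4, h5, h6⟩
    refine E.hcond4 (n + 1) 1 (by omega) ⟨by rw [h1, h2]; norm_num, fun j hj => ?_, ?_⟩
    · have : j = 0 := by omega
      subst this
      rw [show n + 1 + 1 + 0 = n + 2 by rfl, h3, h4]; norm_num
    · rw [show n + 1 + 1 + 1 = n + 3 by rfl, h5, h6]; norm_num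

/-- the sign `(-1)^j`, `j` the number of odd partial quotients up to `n` -/
noncomputable def sg (E : ANIE α) (n : ℕ) : ℝ := (-1) ^ E.oddIdx n

theorem sg_sq (E : ANIE α) (n : ℕ) : E.sg n * E.sg n = 1 := by
  unfold sg
  rw [← mul_pow]; norm_num

theorem oddIdx_succ (E : ANIE α) (n : ℕ) :
    E.oddIdx (n + 1) = E.oddIdx n + if Odd (E.a (n + 1)) then 1 else 0 := by
  unfold oddIdx
  rw [Finset.card_filter, Finset.card_filter, Finset.sum_Icc_succ_top (by omega)]

theorem sg_odd (E : ANIE α) (n : ℕ) (ho : Odd (E.a (n + 1))) : E.sg (n + 1) = -E.sg n := by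
  unfold sg
  rw [oddIdx_succ, if_pos ho, pow_succ]; ring

theorem sg_even (E : ANIE α) (n : ℕ) (ho : ¬ Odd (E.a (n + 1))) : E.sg (n + 1) = E.sg n := by
  unfold sg
  rw [oddIdx_succ, if_neg ho, add_zero]

theorem lam_odd (E : ANIE α) (n : ℕ) (ho : Odd (E.a (n + 1))) :
    (E.lam (n + 1) : ℝ) = -E.sg n := by
  rw [← E.sg_odd n ho]
  unfold lam sg
  rw [if_pos ho]; push_cast; rfl

theorem lam_even (E : ANIE α) (n : ℕ) (ho : ¬ Odd (E.a (n + 1))) :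
    (E.lam (n + 1) : ℝ) = 0 := by
  unfold lam
  rw [if_neg ho]; push_cast; rfl

theorem lam_abs (E : ANIE α) (n : ℕ) : |(E.lam n : ℝ)| ≤ 1 := by
  unfold lam
  split_ifs
  · push_cast
    rw [abs_pow]; norm_num
  · norm_num

theorem delta_succ (E : ANIE α) (n : ℕ) : E.delta (n + 1) = E.delta n * (-E.e (n + 2)) := by
  unfold delta
  rw [Finset.prod_Icc_succ_top (by omega)]; ring

theorem delta_ne (E : ANIE α) (n : ℕ) : (E.delta n : ℝ) ≠ 0 := by
  have : E.delta n ≠ 0 := by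
    unfold delta
    rw [neg_ne_zero, Finset.prod_ne_zero_iff]
    intro j _
    rcases E.he j with h | h <;> rw [h] <;> norm_num
  exact_mod_cast this

theorem dminus_zero (E : ANIE α) : E.dminus 0 = 0 := by simp [dminus]

theorem e_sq (E : ANIE α) (n : ℕ) : (E.e n : ℝ) * E.e n = 1 := by
  rcases E.he n with h | h <;> rw [h] <;> norm_num

theorem dminus_succ (E : ANIE α) (n : ℕ) :
    E.dminus (n + 1) = E.abar (n + 1) * ((E.lam (n + 1) : ℝ) - (E.e (n + 1) : ℝ) * E.dminus n) := by
  rcases n with _ | n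
  · rw [dminus_zero, abar_succ]
    unfold dminus
    have h1 := E.delta_ne 0
    have h2 := E.q_pos 1
    rw [Finset.sum_Icc_succ_top (by omega)]
    simp
    field_simp
  · have h1 := E.delta_ne (n + 1)
    have h0 := E.delta_ne n
    have q1 := E.q_pos (n + 1)
    have q2 := E.q_pos (n + 2)
    have hd : (E.delta (n + 1) : ℝ) = E.delta n * (-E.e (n + 2)) := by
      rw [delta_succ]; push_cast; ring
    have hes := E.e_sq (n + 2)
    have hS : (∑ i ∈ Finset.Icc 1 (n + 1),
        (E.lam i : ℝ) * (E.delta (i - 1) : ℝ) * (qs E.a E.e (i - 1) : ℝ)) =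
        E.dminus (n + 1) * ((E.delta n : ℝ) * (qs E.a E.e (n + 1) : ℝ)) := by
      unfold dminus
      rw [Nat.add_sub_cancel, div_mul_cancel₀]
      exact mul_ne_zero h0 q1.ne'
    rw [abar_succ]
    conv_lhs => unfold dminus
    rw [Finset.sum_Icc_succ_top (by omega), hS, Nat.add_sub_cancel,
      show n + 1 + 1 = n + 2 by rfl, div_eq_iff (mul_ne_zero h1 q2.ne'),
      div_mul_eq_mul_div, div_mul_eq_mul_div, eq_div_iff q2.ne', hd]
    linear_combination (- E.dminus (n + 1) * (E.delta n : ℝ) * (qs E.a E.e (n + 1) : ℝ) *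
      (qs E.a E.e (n + 2) : ℝ)) * hes

theorem D_succ (E : ANIE α) (n : ℕ) : E.D (n + 1) = E.D n * E.t n := by
  unfold D; rw [Finset.prod_range_succ]

theorem D_pos (E : ANIE α) (n : ℕ) : 0 < E.D n :=
  Finset.prod_pos fun j _ => E.htpos j

theorem D_le (E : ANIE α) (h12 : α < 1 / 2) (n k : ℕ) :
    E.D (n + k) ≤ E.D n * (6181 / 10000) ^ k := by
  induction k with
  | zero => simp
  | succ k ih =>
    rw [← add_assoc, D_succ, pow_succ, ← mul_assoc]
    exact mul_le_mul ih ((E.sys0 h12).t_le _) (E.htpos _).le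
      (mul_nonneg (E.D_pos n).le (by positivity))

theorem term_le (E : ANIE α) (h12 : α < 1 / 2) (n k : ℕ) :
    ‖(E.lam (n + 1 + k) : ℝ) * E.D (n + 1 + k)‖ ≤ E.D n * (6181 / 10000) ^ k := by
  rw [norm_mul, Real.norm_eq_abs, Real.norm_eq_abs, abs_of_pos (E.D_pos _)]
  have h1 := E.lam_abs (n + 1 + k)
  have h2 := E.D_le h12 (n + 1) k
  have h3 : E.D (n + 1) ≤ E.D n := by
    rw [D_succ]; nlinarith [E.D_pos n, E.htlt1 n]
  have h4 : E.D (n + 1) * (6181 / 10000) ^ k ≤ E.D n * (6181 / 10000) ^ k :=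
    mul_le_mul_of_nonneg_right h3 (by positivity)
  nlinarith [E.D_pos (n + 1 + k)]

theorem geo (E : ANIE α) (n : ℕ) :
    HasSum (fun k : ℕ => E.D n * (6181 / 10000 : ℝ) ^ k) (E.D n * (1 - 6181 / 10000)⁻¹) :=
  (hasSum_geometric_of_lt_one (by norm_num) (by norm_num)).mul_left _

theorem term_summable (E : ANIE α) (h12 : α < 1 / 2) (n : ℕ) :
    Summable fun k : ℕ => (E.lam (n + 1 + k) : ℝ) * E.D (n + 1 + k) :=
  Summable.of_norm_bounded (E.geo n).summable (E.term_le h12 n)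

theorem dplus_bd (E : ANIE α) (h12 : α < 1 / 2) (n : ℕ) : |E.dplus n| ≤ 3 := by
  unfold dplus
  rw [abs_div, abs_of_pos (E.D_pos n), div_le_iff₀ (E.D_pos n)]
  have h := tsum_of_norm_bounded (E.geo n) (E.term_le h12 n)
  rw [Real.norm_eq_abs] at h
  have : (1 - 6181 / 10000 : ℝ)⁻¹ ≤ 3 := by norm_num
  nlinarith [E.D_pos n]

theorem dplus_rec (E : ANIE α) (h12 : α < 1 / 2) (n : ℕ) :
    E.dplus n = E.t n * ((E.lam (n + 1) : ℝ) + E.dplus (n + 1)) := by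
  unfold dplus
  rw [(E.term_summable h12 n).tsum_eq_zero_add]
  have h1 := E.D_pos n
  have h2 := E.htpos n
  have e1 : (∑' k : ℕ, (E.lam (n + 1 + (k + 1)) : ℝ) * E.D (n + 1 + (k + 1))) =
      ∑' k : ℕ, (E.lam (n + 1 + 1 + k) : ℝ) * E.D (n + 1 + 1 + k) := by
    refine tsum_congr fun k => ?_
    rw [show n + 1 + (k + 1) = n + 1 + 1 + k by omega]
  rw [e1, add_zero, D_succ E n]
  field_simp

/-- normalised `d^+` -/
noncomputable def hh (E : ANIE α) (n : ℕ) : ℝ := -(E.sg n * E.dplus n)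

/-- normalised `d^-` -/
noncomputable def gg (E : ANIE α) (n : ℕ) : ℝ := E.sg n * E.dminus n

theorem hh_odd (E : ANIE α) (h12 : α < 1 / 2) (n : ℕ) (ho : Odd (E.a (n + 1))) :
    E.hh n = E.t n * (1 - E.hh (n + 1)) := by
  unfold hh
  rw [E.dplus_rec h12 n, E.lam_odd n ho, E.sg_odd n ho]
  linear_combination (E.t n) * E.sg_sq n

theorem hh_even (E : ANIE α) (h12 : α < 1 / 2) (n : ℕ) (ho : ¬ Odd (E.a (n + 1))) :
    E.hh n = E.t n * E.hh (n + 1) := by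
  unfold hh
  rw [E.dplus_rec h12 n, E.lam_even n ho, E.sg_even n ho]
  ring

theorem sg_abs (E : ANIE α) (n : ℕ) : |E.sg n| = 1 := by
  unfold sg; rw [abs_pow]; norm_num

theorem hh_contr (E : ANIE α) (h12 : α < 1 / 2) (k : ℕ) : ∀ n,
    -(3 * (6181 / 10000) ^ k) ≤ E.hh n ∧ E.hh n ≤ 1 + 3 * (6181 / 10000) ^ k := by
  induction k with
  | zero =>
    intro n
    have h := E.dplus_bd h12 n
    have : |E.hh n| ≤ 3 := by
      unfold hh; rw [abs_neg, abs_mul, sg_abs, one_mul]; exact h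
    rw [abs_le] at this
    rw [pow_zero]
    constructor <;> linarith [this.1, this.2]
  | succ k ih =>
    intro n
    obtain ⟨i1, i2⟩ := ih (n + 1)
    have ht := (E.sys0 h12).t_le n
    have ht0 := E.htpos n
    have hp : (0 : ℝ) < (6181 / 10000) ^ k := by positivity
    rw [pow_succ]
    by_cases ho : Odd (E.a (n + 1))
    · rw [E.hh_odd h12 n ho]
      constructor <;> nlinarith
    · rw [E.hh_even h12 n ho]
      constructor <;> nlinarith

theorem hh_mem (E : ANIE α) (h12 : α < 1 / 2) (n : ℕ) : 0 ≤ E.hh n ∧ E.hh n ≤ 1 := by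
  have hlim : Filter.Tendsto (fun k : ℕ => 3 * (6181 / 10000 : ℝ) ^ k) Filter.atTop (nhds 0) := by
    have := (tendsto_pow_atTop_nhds_zero_of_lt_one (r := (6181 / 10000 : ℝ)) (by norm_num)
      (by norm_num)).const_mul 3
    simpa using this
  constructor
  · have h1 := hlim.neg
    rw [neg_zero] at h1
    exact le_of_tendsto h1 (Filter.Eventually.of_forall fun k => (E.hh_contr h12 k n).1)
  · have h1 := hlim.const_add 1
    rw [add_zero] at h1
    exact ge_of_tendsto h1 (Filter.Eventually.of_forall fun k => (E.hh_contr h12 k n).2)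

theorem sys (E : ANIE α) (h12 : α < 1 / 2) : Sys E.a E.e E.t E.abar E.gg E.hh where
  toSys0 := E.sys0 h12
  g0 := by unfold gg; rw [dminus_zero, mul_zero]
  gop := by
    intro n ho k
    unfold gg
    rw [E.dminus_succ n, E.lam_odd n ho, E.sg_odd n ho, k]; push_cast
    linear_combination (E.abar (n + 1)) * E.sg_sq n
  gom := by
    intro n ho k
    unfold gg
    rw [E.dminus_succ n, E.lam_odd n ho, E.sg_odd n ho, k]; push_cast
    linear_combination (E.abar (n + 1)) * E.sg_sq n
  gep := by
    intro n ho k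
    unfold gg
    rw [E.dminus_succ n, E.lam_even n ho, E.sg_even n ho, k]; push_cast
    ring
  gem := by
    intro n ho k
    unfold gg
    rw [E.dminus_succ n, E.lam_even n ho, E.sg_even n ho, k]; push_cast
    ring
  hod := E.hh_odd h12
  hev := E.hh_even h12
  hnn := fun n => (E.hh_mem h12 n).1
  hle := by
    intro n
    obtain ⟨h1, h2⟩ := E.hh_mem h12 (n + 1)
    have ht := E.htpos n
    by_cases ho : Odd (E.a (n + 1))
    · rw [E.hh_odd h12 n ho]; nlinarith
    · rw [E.hh_even h12 n ho]; nlinarith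

end ANIE

/-- Lemma 8: for an adjusted nearest integer expansion with `liminf a_i = 2`, if
`σ d_i^+ > 0` and `ᾱ_i < 1/2`, then `s_1(i), s_3(i) ≥
(1/4)(√10-3)·(3-θ_1-θ_1/(1-θ_1))/((11-√10)/3-θ_1) = 1/25.159…` for `γ_*`. -/
theorem stmt15 (α : ℝ) (hirr : Irrational α) (h0 : 0 < α) (h12 : α < 1 / 2)
    (E : ANIE α) (hfreq : ∃ᶠ i in Filter.atTop, E.a i = 2)
    (θ1 : ℝ) (hθ1 : θ1 = (Real.sqrt 13 - 3) / 2)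
    (i : ℕ) (hi : 1 ≤ i)
    (σ : ℝ) (hσ : σ = 1 ∨ σ = -1)
    (hdp : 0 < σ * E.dplus i) (habar : E.abar i < 1 / 2) :
    1 / 4 * (1 - E.abar i + σ * E.dminus i) *
        ((1 + (E.e (i + 1) : ℝ) * E.t i + σ * E.dplus i) /
          (1 + (E.e (i + 1) : ℝ) * E.abar i * E.t i)) ≥
      1 / 4 * (Real.sqrt 10 - 3) *
        ((3 - θ1 - θ1 / (1 - θ1)) / ((11 - Real.sqrt 10) / 3 - θ1)) := by
  have S := E.sys h12
  -- numerical constants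
  have hr : Real.sqrt 10 * Real.sqrt 10 = 10 := Real.mul_self_sqrt (by norm_num)
  have hr0 := Real.sqrt_nonneg 10
  have hr1 : 31622 / 10000 < Real.sqrt 10 := by nlinarith
  have hr2 : Real.sqrt 10 < 31623 / 10000 := by nlinarith
  have hz : Real.sqrt 13 * Real.sqrt 13 = 13 := Real.mul_self_sqrt (by norm_num)
  have hz0 := Real.sqrt_nonneg 13
  have hz1 : 36055 / 10000 < Real.sqrt 13 := by nlinarith
  have hz2 : Real.sqrt 13 < 36056 / 10000 := by nlinarith
  have hθ : θ1 * (3 + θ1) = 1 := by rw [hθ1]; nlinarith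
  have hθl : 30275 / 100000 < θ1 := by rw [hθ1]; linarith
  have hθu : θ1 < 3028 / 10000 := by rw [hθ1]; linarith
  generalize Real.sqrt 10 = r at *
  have hγ : θ1 / (1 - θ1) = (1 + θ1) / 3 := by
    rw [div_eq_div_iff (by linarith) (by norm_num)]
    linear_combination hθ
  rw [hγ]
  set R : ℝ := (3 - θ1 - (1 + θ1) / 3) / ((11 - r) / 3 - θ1) with hRdef
  have hK : 0 < (11 - r) / 3 - θ1 := by linarith
  have hR : R * ((11 - r) / 3 - θ1) = (8 - 4 * θ1) / 3 := by
    rw [hRdef, div_mul_cancel₀ _ hK.ne']; ring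
  have hRu : R < 9798 / 10000 := by nlinarith
  have hRl : 979 / 1000 < R := by nlinarith
  have hc : (r - 3) * R ≤ 159 / 1000 := by nlinarith
  have hmain := S.main hc rfl hr hr1 hr2 hθ (by linarith) (by linarith) hR i hi habar
  -- the sign
  have hsg := E.sg_sq i
  have hh0 := S.hnn i
  have hsσ : σ = -E.sg i := by
    have hs : E.sg i = 1 ∨ E.sg i = -1 := mul_self_eq_one_iff.1 hsg
    have hh0' : 0 ≤ -(E.sg i * E.dplus i) := hh0
    rcases hσ with rfl | rfl <;> rcases hs with s | s <;> rw [s] at hh0' ⊢ <;> linarith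
  have e1 : σ * E.dminus i = -E.gg i := by rw [hsσ]; unfold ANIE.gg; ring
  have e2 : σ * E.dplus i = E.hh i := by rw [hsσ]; unfold ANIE.hh; ring
  rw [e1, e2]
  have hb0 := S.bnn i
  have ht0 := S.tpos i
  have ht1 := S.tlt i
  have hden : 0 < 1 + (E.e (i + 1) : ℝ) * E.abar i * E.t i := by
    rcases E.he (i + 1) with k | k <;> rw [k] <;> push_cast <;> nlinarith
  clear_value R
  rw [ge_iff_le, mul_assoc, mul_assoc]
  refine mul_le_mul_of_nonneg_left ?_ (by norm_num)
  rw [← mul_div_assoc, le_div_iff₀ hden]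
  rw [← sub_eq_add_neg]
  exact hmain
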